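/- Let k, m, n be positive integers with m ≤ k ≤ n and let w ∈ Sₙ. Then in Hₙ, 𝔖_w · e_m(x₁,…,x_k) = Σ_{w′} 𝔖_{w′}, where e_m(x₁,…,x_k) is the elementary symmetric polynomial of degree m in x₁,…,x_k and the sum is over all w′ ∈ Sₙ with w →_{c[k,m]} w′. -/

import Mathlib

open Equiv MvPolynomial

attribute [local instance] Classical.propDecidable

namespace SchubertPieri

/-- Position `j ∈ {1,…,N}` (1-indexed) as an element of `Fin N` (0-indexed). -/
def pos (N : ℕ) [NeZero N] (j : ℕ) : Fin N :=
  ⟨(j - 1) % N, Nat.mod_lt _ (Nat.pos_of_ne_zero (NeZero.ne N))⟩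

/-- The transposition `t_{a,b}` interchanging positions `a` and `b` (1-indexed). -/
def t (N : ℕ) [NeZero N] (a b : ℕ) : Equiv.Perm (Fin N) :=
  Equiv.swap (pos N a) (pos N b)

/-- The value `w(j)` for `j ∈ {1,…,N}` (1-indexed). -/
def val {N : ℕ} [NeZero N] (w : Equiv.Perm (Fin N)) (j : ℕ) : ℕ :=
  (w (pos N j) : ℕ) + 1

/-- The length of `w`: its number of inversions. -/
def len {N : ℕ} (w : Equiv.Perm (Fin N)) : ℕ :=
  (Finset.univ.filter fun p : Fin N × Fin N => p.1 < p.2 ∧ w p.2 < w p.1).card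

/-- The longest permutation `w₀ : j ↦ N+1-j`. -/
def w0 (N : ℕ) : Equiv.Perm (Fin N) :=
  ⟨Fin.rev, Fin.rev, Fin.rev_rev, Fin.rev_rev⟩

/-- The product `t_{a 0, b 0} ⋯ t_{a (i-1), b (i-1)}`. -/
def tProd (N : ℕ) [NeZero N] (a b : ℕ → ℕ) (i : ℕ) : Equiv.Perm (Fin N) :=
  ((List.range i).map fun j => t N (a j) (b j)).prod

/-- `r[k,m] = t_{k,k+1} t_{k,k+2} ⋯ t_{k,k+m}`, the (m+1)-cycle with
`r[k,m](k) = k+m` and `r[k,m](j) = j-1` for `k+1 ≤ j ≤ k+m`. -/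
def rPerm (N k m : ℕ) [NeZero N] : Equiv.Perm (Fin N) :=
  ((List.range m).map fun i => t N k (k + 1 + i)).prod

/-- `c[k,m] = t_{k,k+1} t_{k-1,k+1} ⋯ t_{k-m+1,k+1}`, the (m+1)-cycle with
`c[k,m](j) = j+1` for `k-m+1 ≤ j ≤ k` and `c[k,m](k+1) = k-m+1`. -/
def cPerm (N k m : ℕ) [NeZero N] : Equiv.Perm (Fin N) :=
  ((List.range m).map fun i => t N (k - i) (k + 1)).prod

/-- The conditions that `aᵢ ≤ k < bᵢ` (with all indices in `{1,…,N}`) and that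
`ℓ(w t_{a₁ b₁} ⋯ t_{aᵢ bᵢ}) = ℓ(w) + i` for `1 ≤ i ≤ m`. -/
def StepOK (N k m : ℕ) [NeZero N] (w : Equiv.Perm (Fin N)) (a b : ℕ → ℕ) : Prop :=
  (∀ i, i < m → 1 ≤ a i ∧ a i ≤ k ∧ k < b i ∧ b i ≤ N) ∧
  (∀ i, i ≤ m → len (w * tProd N a b i) = len w + i)

/-- `w →_{r[k,m]} w'`. -/
def RelR (N k m : ℕ) [NeZero N] (w w' : Equiv.Perm (Fin N)) : Prop :=
  ∃ a b : ℕ → ℕ, StepOK N k m w a b ∧ w' = w * tProd N a b m ∧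
    (∀ i j, i < m → j < m → i ≠ j → b i ≠ b j)

/-- `w →_{c[k,m]} w'`. -/
def RelC (N k m : ℕ) [NeZero N] (w w' : Equiv.Perm (Fin N)) : Prop :=
  ∃ a b : ℕ → ℕ, StepOK N k m w a b ∧ w' = w * tProd N a b m ∧
    (∀ i j, i < m → j < m → i ≠ j → a i ≠ a j)

/-- The divided difference operator `∂ᵢ f = (f - sᵢ·f)/(xᵢ - xᵢ₊₁)` (1-indexed `i`);
the quotient is exact, and is recovered here as the (unique) witness of divisibility. -/
noncomputable def divDiff {N : ℕ} [NeZero N] (i : ℕ) (f : MvPolynomial (Fin N) ℤ) :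
    MvPolynomial (Fin N) ℤ :=
  if h : (X (pos N i) - X (pos N (i + 1))) ∣ (f - rename (⇑(t N i (i + 1))) f) then
    h.choose
  else 0

/-- `∂_{a₁} ∘ ⋯ ∘ ∂_{a_p}` applied to `f`, for a word `l = [a₁,…,a_p]`. -/
noncomputable def divDiffWord {N : ℕ} [NeZero N] (l : List ℕ) (f : MvPolynomial (Fin N) ℤ) :
    MvPolynomial (Fin N) ℤ :=
  l.foldr divDiff f

/-- Auxiliary: produce a reduced word for `w` by repeatedly removing a descent. -/
def redWordAux (N : ℕ) [NeZero N] : ℕ → Equiv.Perm (Fin N) → List ℕ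
  | 0, _ => []
  | fuel + 1, w =>
    match ((List.range (N - 1)).map (· + 1)).find? (fun i => decide (val w (i + 1) < val w i)) with
    | none => []
    | some i => redWordAux N fuel (w * t N i (i + 1)) ++ [i]

/-- A canonical reduced word `(a₁,…,a_p)` for `w`, i.e. `w = s_{a₁} ⋯ s_{a_p}` with `p = ℓ(w)`. -/
def redWord (N : ℕ) [NeZero N] (w : Equiv.Perm (Fin N)) : List ℕ :=
  redWordAux N (N * N) w

/-- The staircase monomial `x₁^{N-1} x₂^{N-2} ⋯ x_{N-1}`. -/
noncomputable def staircase (N : ℕ) : MvPolynomial (Fin N) ℤ :=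
  ∏ i : Fin N, X i ^ (N - 1 - (i : ℕ))

/-- The Schubert polynomial `𝔖_w = ∂_{w⁻¹w₀}(x₁^{N-1} ⋯ x_{N-1})`. -/
noncomputable def schubertPoly (N : ℕ) [NeZero N] (w : Equiv.Perm (Fin N)) :
    MvPolynomial (Fin N) ℤ :=
  divDiffWord (redWord N (w⁻¹ * w0 N)) (staircase N)

/-- The ideal of `Rₙ` generated by the symmetric polynomials with zero constant term. -/
noncomputable def symIdeal (N : ℕ) : Ideal (MvPolynomial (Fin N) ℤ) :=
  Ideal.span {f : MvPolynomial (Fin N) ℤ | f.IsSymmetric ∧ constantCoeff f = 0}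

/-- The ring `Hₙ = Rₙ/𝒮`. -/
abbrev HRing (N : ℕ) := MvPolynomial (Fin N) ℤ ⧸ symIdeal N

/-- The class of the Schubert polynomial `𝔖_w` in `Hₙ`. -/
noncomputable def SS (N : ℕ) [NeZero N] (w : Equiv.Perm (Fin N)) : HRing N :=
  Ideal.Quotient.mk (symIdeal N) (schubertPoly N w)

/-- The complete homogeneous symmetric polynomial of degree `m` in `x₁,…,x_k`. -/
noncomputable def hPoly (N k m : ℕ) : MvPolynomial (Fin N) ℤ :=
  ∑ s ∈ (Finset.univ.filter fun i : Fin N => (i : ℕ) < k).sym m,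
    (Multiset.map X (s : Multiset (Fin N))).prod

/-- The elementary symmetric polynomial of degree `m` in `x₁,…,x_k`. -/
noncomputable def ePoly (N k m : ℕ) : MvPolynomial (Fin N) ℤ :=
  ∑ s ∈ (Finset.univ.filter fun i : Fin N => (i : ℕ) < k).powersetCard m, ∏ i ∈ s, X i

/-- Covering relation of the `k`-Bruhat order. -/
def kCover (N k : ℕ) [NeZero N] (w w' : Equiv.Perm (Fin N)) : Prop :=
  ∃ a b : ℕ, 1 ≤ a ∧ a ≤ k ∧ k < b ∧ b ≤ N ∧ w' = w * t N a b ∧ len w' = len w + 1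

/-- The (strict) `k`-Bruhat order `<ₖ`. -/
def kBruhat (N k : ℕ) [NeZero N] : Equiv.Perm (Fin N) → Equiv.Perm (Fin N) → Prop :=
  Relation.TransGen (kCover N k)

/-- The label `w⁽ⁱ⁺¹⁾(a_{i+1})` (0-indexed `i`) of the `(i+1)`-st step of a path. -/
def label {N : ℕ} [NeZero N] (w : Equiv.Perm (Fin N)) (a b : ℕ → ℕ) (i : ℕ) : ℕ :=
  val (w * tProd N a b (i + 1)) (a i)

/-- `(a,b)` encodes a path of length `m` in the `k`-Bruhat order from `w` to `w'`
(normalized so that `a i = b i = 0` for `i ≥ m`, making the encoding unique). -/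
def PathWit (N k m : ℕ) [NeZero N] (w w' : Equiv.Perm (Fin N))
    (ab : (ℕ → ℕ) × (ℕ → ℕ)) : Prop :=
  StepOK N k m w ab.1 ab.2 ∧ w' = w * tProd N ab.1 ab.2 m ∧
    ∀ i, m ≤ i → ab.1 i = 0 ∧ ab.2 i = 0

/-- Paths of length `m` in the `k`-Bruhat order from `w` to `w'` with strictly
increasing labels. -/
def IncPaths (N k m : ℕ) [NeZero N] (w w' : Equiv.Perm (Fin N)) :
    Set ((ℕ → ℕ) × (ℕ → ℕ)) :=
  {ab | PathWit N k m w w' ab ∧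
    ∀ i j, i < j → j < m → label w ab.1 ab.2 i < label w ab.1 ab.2 j}

/-- Paths of length `m` in the `k`-Bruhat order from `w` to `w'` with strictly
decreasing labels. -/
def DecPaths (N k m : ℕ) [NeZero N] (w w' : Equiv.Perm (Fin N)) :
    Set ((ℕ → ℕ) × (ℕ → ℕ)) :=
  {ab | PathWit N k m w w' ab ∧
    ∀ i j, i < j → j < m → label w ab.1 ab.2 j < label w ab.1 ab.2 i}


/-- The cycle `(x₁ x₂ … x_r)` (sending `x₁ ↦ x₂ ↦ ⋯ ↦ x_r ↦ x₁`), as a product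
of transpositions. -/
def cycleList (N : ℕ) [NeZero N] (l : List ℕ) : Equiv.Perm (Fin N) :=
  ((l.zip l.tail).map fun p => t N p.1 p.2).prod

/-- The Grassmannian permutation `h[k;p,q]` of descent `k` and hook shape `(p,1^{q-1})`:
the `(p+q)`-cycle `(k-q+1  k-q+2 … k  k+p  k+p-1 … k+1)`. -/
def hookPerm (N k p q : ℕ) [NeZero N] : Equiv.Perm (Fin N) :=
  cycleList N (((List.range q).map fun i => k - q + 1 + i) ++
    ((List.range p).reverse.map fun i => k + 1 + i))

/-- `w|ₚ ∈ S_{N-1}`: delete row `p` and column `w(p)` from the permutation matrix of `w`. -/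
def drop {N : ℕ} (w : Equiv.Perm (Fin (N + 1))) (p : Fin (N + 1)) : Equiv.Perm (Fin N) :=
  Equiv.removeNone (((finSuccEquiv' p).symm.trans (w : Fin (N + 1) ≃ Fin (N + 1))).trans
    (finSuccEquiv' (w p)))

/-- `lam` is a partition with at most `k` parts (1-indexed parts `lam 1 ≥ lam 2 ≥ ⋯`,
normalized by `lam 0 = 0`). -/
def IsPartFun (k : ℕ) (lam : ℕ → ℕ) : Prop :=
  lam 0 = 0 ∧ (∀ j, 1 ≤ j → lam (j + 1) ≤ lam j) ∧ ∀ j, k < j → lam j = 0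

/-- `h_d(x₁,…,x_k)` for an integer `d`, with `h_d = 0` for `d < 0`. -/
noncomputable def hPolyZ (N k : ℕ) (d : ℤ) : MvPolynomial (Fin N) ℤ :=
  if 0 ≤ d then hPoly N k d.toNat else 0

/-- The Schur polynomial `s_λ(x₁,…,x_k)`, via the Jacobi–Trudi determinant
`det(h_{λᵢ+j-i})_{1 ≤ i,j ≤ k}`. -/
noncomputable def schurPoly (N k : ℕ) (lam : ℕ → ℕ) : MvPolynomial (Fin N) ℤ :=
  (Matrix.of fun i j : Fin k =>
    hPolyZ N k ((lam ((i : ℕ) + 1) : ℤ) + (j : ℕ) - (i : ℕ))).det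

/-- `r_j = #{i : aᵢ = j}` (with `i` ranging over `0,…,m-1`, 0-indexed). -/
def rJ (a : ℕ → ℕ) (m j : ℕ) : ℕ := ((Finset.range m).filter fun i => a i = j).card

/-- `μ_j = r_{j+1} + ⋯ + r_k`. -/
def muJ (a : ℕ → ℕ) (m k j : ℕ) : ℕ :=
  if j = 0 then 0 else ∑ j' ∈ Finset.Icc (j + 1) k, rJ a m j'

/-- `λ_j = μ_j + r_j`. -/
def lamJ (a : ℕ → ℕ) (m k j : ℕ) : ℕ :=
  if j = 0 then 0 else muJ a m k j + rJ a m j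

/-- `d_j = #{i : bᵢ = N+1-j}` (with `i` ranging over `0,…,m-1`, 0-indexed). -/
def dJ (b : ℕ → ℕ) (m N j : ℕ) : ℕ :=
  ((Finset.range m).filter fun i => b i = N + 1 - j).card

/-- `μ′_j = d_{j+1} + ⋯ + d_{N-k}`. -/
def muJ' (b : ℕ → ℕ) (m N k j : ℕ) : ℕ :=
  if j = 0 then 0 else ∑ j' ∈ Finset.Icc (j + 1) (N - k), dJ b m N j'

/-- `λ′_j = μ′_j + d_j`. -/
def lamJ' (b : ℕ → ℕ) (m N k j : ℕ) : ℕ :=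
  if j = 0 then 0 else muJ' b m N k j + dJ b m N j

/-- The conjugate (transpose) partition: `νᵗ_j = #{i : νᵢ ≥ j}`, for `ν` with at
most `k` parts. -/
def conjPart (k : ℕ) (nu : ℕ → ℕ) (j : ℕ) : ℕ :=
  if j = 0 then 0 else ((Finset.Icc 1 k).filter fun i => j ≤ nu i).card

/-- `wv` is the Grassmannian permutation of descent `k` and shape `nu`:
`wv(j) = j + ν_{k+1-j}` for `1 ≤ j ≤ k`, and `wv` is increasing on `{k+1,…,N}`. -/
def IsGrassOf (N k : ℕ) [NeZero N] (nu : ℕ → ℕ) (wv : Equiv.Perm (Fin N)) : Prop :=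
  (∀ j, 1 ≤ j → j ≤ k → val wv j = j + nu (k + 1 - j)) ∧
  (∀ j, k < j → j < N → val wv j < val wv (j + 1))

/-- Paths of length `m` in the `k`-Bruhat order from `w` to `w'` whose labels
increase strictly for the first `p` steps and decrease strictly thereafter
(positions `p, p+1, …, m` being decreasing, 1-indexed). -/
def IncDecPaths (N k m p : ℕ) [NeZero N] (w w' : Equiv.Perm (Fin N)) :
    Set ((ℕ → ℕ) × (ℕ → ℕ)) :=
  {ab | PathWit N k m w w' ab ∧
    (∀ i j, i < j → j < p → label w ab.1 ab.2 i < label w ab.1 ab.2 j) ∧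
    (∀ i j, p - 1 ≤ i → i < j → j < m → label w ab.1 ab.2 j < label w ab.1 ab.2 i)}

/-- Paths of length `m` in the `k`-Bruhat order from `w` to `w'` whose labels
decrease strictly for the first `q` steps and increase strictly thereafter. -/
def DecIncPaths (N k m q : ℕ) [NeZero N] (w w' : Equiv.Perm (Fin N)) :
    Set ((ℕ → ℕ) × (ℕ → ℕ)) :=
  {ab | PathWit N k m w w' ab ∧
    (∀ i j, i < j → j < q → label w ab.1 ab.2 j < label w ab.1 ab.2 i) ∧
    (∀ i j, q - 1 ≤ i → i < j → j < m → label w ab.1 ab.2 i < label w ab.1 ab.2 j)}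



/-- `w` is covered by `w * swap a b`. -/
def Cov {N : ℕ} (w : Perm (Fin N)) (a b : Fin N) : Prop :=
  a < b ∧ w a < w b ∧ ∀ c, a < c → c < b → ¬ (w a < w c ∧ w c < w b)

theorem len_eq_sum {N : ℕ} (w : Perm (Fin N)) :
    len w = ∑ p : Fin N, ∑ q : Fin N, if p < q ∧ w q < w p then 1 else 0 := by
  rw [len, Finset.card_filter, ← Finset.univ_product_univ, Finset.sum_product]

theorem sum_split {N : ℕ} (a b : Fin N) (hab : a ≠ b) (f : Fin N → ℕ) :
    ∑ p, f p = f a + f b + ∑ p ∈ Finset.univ.filter (fun c => c ≠ a ∧ c ≠ b), f p := by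
  have h : (Finset.univ : Finset (Fin N)) =
      insert a (insert b (Finset.univ.filter (fun c => c ≠ a ∧ c ≠ b))) := by
    ext c; simp; tauto
  conv_lhs => rw [h]
  rw [Finset.sum_insert, Finset.sum_insert]
  · ring
  · simp
  · simp [hab]

theorem len_swap {N : ℕ} (w : Perm (Fin N)) (a b : Fin N) (hab : a < b) (hw : w a < w b) :
    len (w * swap a b) = len w + 1 +
      2 * (Finset.univ.filter fun c => (a < c ∧ c < b) ∧ (w a < w c ∧ w c < w b)).card := by
  have hne : a ≠ b := ne_of_lt hab
  have key : ∀ u : Perm (Fin N), len u =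
      (∑ p ∈ Finset.univ.filter (fun c => c ≠ a ∧ c ≠ b),
        ∑ q ∈ Finset.univ.filter (fun c => c ≠ a ∧ c ≠ b), if p < q ∧ u q < u p then 1 else 0)
      + (∑ p ∈ Finset.univ.filter (fun c => c ≠ a ∧ c ≠ b),
        ((if p < a ∧ u a < u p then 1 else 0) + (if p < b ∧ u b < u p then 1 else 0) +
        (if a < p ∧ u p < u a then 1 else 0) + (if b < p ∧ u p < u b then 1 else 0)))
      + (if u b < u a then 1 else 0) := by
    intro u
    rw [len_eq_sum, sum_split a b hne]
    simp only [sum_split a b hne (fun q => ite _ _ _)]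
    simp only [Finset.sum_add_distrib, hab, lt_irrefl, not_lt_of_gt hab, false_and, true_and]
    simp only [if_false]
    ring
  rw [key, key w, Finset.card_filter, sum_split a b hne]
  have e1 : ∀ p ∈ Finset.univ.filter (fun c => c ≠ a ∧ c ≠ b), (w * swap a b) p = w p := by
    intro p hp
    simp only [Finset.mem_filter, Finset.mem_univ, true_and] at hp
    rw [Perm.mul_apply, swap_apply_of_ne_of_ne hp.1 hp.2]
  have ea : (w * swap a b) a = w b := by simp
  have eb : (w * swap a b) b = w a := by simp
  have h1 : (∑ p ∈ Finset.univ.filter (fun c => c ≠ a ∧ c ≠ b),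
        ∑ q ∈ Finset.univ.filter (fun c => c ≠ a ∧ c ≠ b),
          if p < q ∧ (w * swap a b) q < (w * swap a b) p then 1 else 0) =
      (∑ p ∈ Finset.univ.filter (fun c => c ≠ a ∧ c ≠ b),
        ∑ q ∈ Finset.univ.filter (fun c => c ≠ a ∧ c ≠ b), if p < q ∧ w q < w p then 1 else 0) := by
    refine Finset.sum_congr rfl fun p hp => Finset.sum_congr rfl fun q hq => ?_
    rw [e1 p hp, e1 q hq]
  have h2 : (∑ p ∈ Finset.univ.filter (fun c => c ≠ a ∧ c ≠ b),
        ((if p < a ∧ (w * swap a b) a < (w * swap a b) p then 1 else 0) +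
        (if p < b ∧ (w * swap a b) b < (w * swap a b) p then 1 else 0) +
        (if a < p ∧ (w * swap a b) p < (w * swap a b) a then 1 else 0) +
        (if b < p ∧ (w * swap a b) p < (w * swap a b) b then 1 else 0))) =
      (∑ p ∈ Finset.univ.filter (fun c => c ≠ a ∧ c ≠ b),
        ((if p < a ∧ w a < w p then 1 else 0) + (if p < b ∧ w b < w p then 1 else 0) +
        (if a < p ∧ w p < w a then 1 else 0) + (if b < p ∧ w p < w b then 1 else 0)))
      + 2 * ∑ p ∈ Finset.univ.filter (fun c => c ≠ a ∧ c ≠ b),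
          (if (a < p ∧ p < b) ∧ (w a < w p ∧ w p < w b) then 1 else 0) := by
    rw [Finset.mul_sum, ← Finset.sum_add_distrib]
    refine Finset.sum_congr rfl fun p hp => ?_
    rw [e1 p hp, ea, eb]
    simp only [Finset.mem_filter, Finset.mem_univ, true_and] at hp
    have h3 : w p ≠ w a := fun h => hp.1 (w.injective h)
    have h4 : w p ≠ w b := fun h => hp.2 (w.injective h)
    rcases lt_or_gt_of_ne hp.1 with h5 | h5 <;> rcases lt_or_gt_of_ne hp.2 with h6 | h6 <;>
    rcases lt_or_gt_of_ne h3 with h7 | h7 <;> rcases lt_or_gt_of_ne h4 with h8 | h8 <;>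
    first
    | (exfalso; omega)
    | simp [h5, h6, h7, h8, not_lt_of_gt h5, not_lt_of_gt h6, not_lt_of_gt h7, not_lt_of_gt h8]
  rw [h1, h2, ea, eb]
  simp [hw, not_lt_of_gt hw]
  ring

theorem len_swap_iff {N : ℕ} (w : Perm (Fin N)) (a b : Fin N) (hab : a < b) :
    len (w * swap a b) = len w + 1 ↔ Cov w a b := by
  have hne : w a ≠ w b := fun h => (ne_of_lt hab) (w.injective h)
  rcases lt_or_gt_of_ne hne with h | h
  · rw [len_swap w a b hab h]
    have : (Finset.univ.filter fun c => (a < c ∧ c < b) ∧ (w a < w c ∧ w c < w b)).card = 0 ↔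
        Cov w a b := by
      rw [Finset.card_eq_zero, Finset.filter_eq_empty_iff]
      simp only [Cov, hab, h, true_and, Finset.mem_univ, forall_true_left]
      constructor
      · intro H c h1 h2 h3
        exact H ⟨⟨h1, h2⟩, h3⟩
      · rintro H c ⟨⟨h1, h2⟩, h3⟩
        exact H c h1 h2 h3
    rw [← this]
    omega
  · have := len_swap (w * swap a b) a b hab (by simpa using h)
    rw [mul_assoc, swap_mul_self, mul_one] at this
    constructor
    · intro H; omega
    · intro H; exact absurd H.2.1 (not_lt_of_gt h)

theorem len_adj_asc {N : ℕ} (w : Perm (Fin N)) (a b : Fin N) (hab : (b : ℕ) = a + 1)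
    (h : w a < w b) : len (w * swap a b) = len w + 1 := by
  have hlt : a < b := by rw [Fin.lt_def]; omega
  rw [len_swap_iff w a b hlt]
  refine ⟨hlt, h, fun c h1 h2 => ?_⟩
  rw [Fin.lt_def] at h1 h2
  omega

theorem len_adj_desc {N : ℕ} (w : Perm (Fin N)) (a b : Fin N) (hab : (b : ℕ) = a + 1)
    (h : w b < w a) : len w = len (w * swap a b) + 1 := by
  have := len_adj_asc (w * swap a b) a b hab (by simpa using h)
  rwa [mul_assoc, swap_mul_self, mul_one] at this

theorem len_le {N : ℕ} (w : Perm (Fin N)) : len w ≤ N * N := by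
  refine (Finset.card_filter_le _ _).trans ?_
  simp

/-- A permutation without ascents is `w0`; without descents is `1`. -/
theorem eq_one_of_no_desc {n : ℕ} (w : Perm (Fin (n + 1)))
    (h : ∀ a b : Fin (n + 1), (b : ℕ) = a + 1 → ¬ w b < w a) : w = 1 := by
  have hm : StrictMono w := by
    rw [Fin.strictMono_iff_lt_succ]
    intro i
    have := h i.castSucc i.succ (by simp)
    refine lt_of_le_of_ne (not_lt.1 this) fun h => ?_
    have := w.injective h
    simp [Fin.ext_iff] at this
  ext x
  have : w = (1 : Perm (Fin (n+1))) := by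
    apply Equiv.coe_fn_injective
    have h1 : Set.range w = Set.range (id : Fin (n+1) → Fin (n+1)) := by
      rw [w.surjective.range_eq, Set.range_id]
    have := (StrictMono.range_inj hm strictMono_id).1 h1
    exact this
  rw [this]

theorem eq_w0_of_no_asc {n : ℕ} (w : Perm (Fin (n + 1)))
    (h : ∀ a b : Fin (n + 1), (b : ℕ) = a + 1 → ¬ w a < w b) : w = w0 (n + 1) := by
  have : w0 (n + 1) * w = 1 := by
    apply eq_one_of_no_desc
    intro a b hab h1
    apply h a b hab
    simpa [w0] using h1
  have h2 : w0 (n + 1) * w0 (n + 1) = 1 := by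
    ext x; simp [w0]
  calc w = (w0 (n + 1) * w0 (n + 1)) * w := by rw [h2, one_mul]
    _ = _ := by rw [mul_assoc, this, mul_one]



/-- Bruhat operators. -/
noncomputable def tau {N : ℕ} (a b : Fin N) : Module.End ℤ (Perm (Fin N) → ℤ) where
  toFun f := fun w => if Cov (w * swap a b) a b then f (w * swap a b) else 0
  map_add' f g := by
    ext w; simp only [Pi.add_apply]; split_ifs <;> simp
  map_smul' c f := by
    ext w; simp only [Pi.smul_apply, RingHom.id_apply]; split_ifs <;> simp

theorem tau_apply {N : ℕ} (a b : Fin N) (f : Perm (Fin N) → ℤ) (w : Perm (Fin N)) :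
    tau a b f w = if Cov (w * swap a b) a b then f (w * swap a b) else 0 := rfl

theorem mul_swap_left {N : ℕ} (u : Perm (Fin N)) (a b : Fin N) : (u * swap a b) a = u b := by simp
theorem mul_swap_right {N : ℕ} (u : Perm (Fin N)) (a b : Fin N) : (u * swap a b) b = u a := by simp
theorem mul_swap_ne {N : ℕ} (u : Perm (Fin N)) {a b c : Fin N} (h : c ≠ a) (h' : c ≠ b) :
    (u * swap a b) c = u c := by
  rw [Perm.mul_apply, swap_apply_of_ne_of_ne h h']

theorem braid_cov {N : ℕ} (u : Perm (Fin N)) {a j b : Fin N} (haj : a < j) (hjb : j < b) :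
    ((Cov u a j ∧ Cov (u * swap a j) j b) ↔
      ((Cov u a b ∧ Cov (u * swap a b) a j) ∨ (Cov u j b ∧ Cov (u * swap j b) a b))) ∧
    ¬ ((Cov u a b ∧ Cov (u * swap a b) a j) ∧ (Cov u j b ∧ Cov (u * swap j b) a b)) := by
  have hab := haj.trans hjb
  have n1 : u a ≠ u j := fun h => (ne_of_lt haj) (u.injective h)
  have n2 : u a ≠ u b := fun h => (ne_of_lt hab) (u.injective h)
  have n3 : u j ≠ u b := fun h => (ne_of_lt hjb) (u.injective h)
  have v1 : (u * swap a j) j = u a := mul_swap_right _ _ _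
  have v2 : (u * swap a j) b = u b := mul_swap_ne _ hab.ne' hjb.ne'
  have v3 : (u * swap a b) a = u b := mul_swap_left _ _ _
  have v4 : (u * swap a b) j = u j := mul_swap_ne _ haj.ne' hjb.ne
  have v5 : (u * swap j b) a = u a := mul_swap_ne _ haj.ne hab.ne
  have v6 : (u * swap j b) b = u j := mul_swap_right _ _ _
  have v7 : (u * swap j b) j = u b := mul_swap_left _ _ _
  have g1 : ∀ c, j < c → c < b → (u * swap a j) c = u c := fun c h h' =>
    mul_swap_ne _ (haj.trans h).ne' h.ne'
  have g2 : ∀ c, a < c → c < j → (u * swap a b) c = u c := fun c h h' =>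
    mul_swap_ne _ h.ne' (h'.trans hjb).ne
  have g3 : ∀ c, a < c → c < b → c ≠ j → (u * swap j b) c = u c := fun c h h' h'' =>
    mul_swap_ne _ h'' h'.ne
  have inj : ∀ c d, u c = u d → c = d := fun c d h => u.injective h
  simp only [Cov, v1, v2, v3, v4, v5, v6, haj, hjb, hab, true_and]
  have q1 : (∀ c, j < c → c < b → ¬ (u a < (u * swap a j) c ∧ (u * swap a j) c < u b)) ↔
     (∀ c, j < c → c < b → ¬ (u a < u c ∧ u c < u b)) := by
    refine forall_congr' fun c => ?_
    refine forall_congr' fun h => ?_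
    refine forall_congr' fun h' => ?_
    rw [g1 c h h']
  have q2 : (∀ c, a < c → c < j → ¬ (u b < (u * swap a b) c ∧ (u * swap a b) c < u j)) ↔
     (∀ c, a < c → c < j → ¬ (u b < u c ∧ u c < u j)) := by
    refine forall_congr' fun c => ?_
    refine forall_congr' fun h => ?_
    refine forall_congr' fun h' => ?_
    rw [g2 c h h']
  rw [q1, q2]
  clear q1 q2
  constructor
  · constructor
    · rintro ⟨⟨h1, h2⟩, h3, h4⟩
      rcases lt_or_gt_of_ne n3 with h5 | h5
      · right
        refine ⟨⟨h5, ?_⟩, h1, ?_⟩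
        · intro c h6 h7 h8
          exact h4 c h6 h7 ⟨h1.trans h8.1, h8.2⟩
        · intro c h6 h7
          rcases lt_trichotomy c j with h8 | h8 | h8
          · rw [g3 c h6 h7 h8.ne]; exact h2 c h6 h8
          · subst h8; rw [v7]; exact fun h => absurd h.2 (not_lt_of_gt h5)
          · rw [g3 c h6 h7 h8.ne']
            exact fun h => h4 c h8 h7 ⟨h.1, h.2.trans h5⟩
      · left
        refine ⟨⟨h3, ?_⟩, h5, ?_⟩
        · intro c h6 h7
          rcases lt_trichotomy c j with h8 | h8 | h8
          · exact fun h => h2 c h6 h8 ⟨h.1, h.2.trans h5⟩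
          · subst h8; exact fun h => absurd h.2 (not_lt_of_gt h5)
          · exact h4 c h8 h7
        · intro c h6 h7 h8
          exact h2 c h6 h7 ⟨h3.trans h8.1, h8.2⟩
    · rintro (⟨⟨h1, h2⟩, h3, h4⟩ | ⟨⟨h1, h2⟩, h3, h4⟩)
      · refine ⟨⟨h1.trans h3, ?_⟩, h1, ?_⟩
        · intro c h6 h7 h8
          rcases lt_trichotomy (u c) (u b) with h9 | h9 | h9
          · exact h2 c h6 (h7.trans hjb) ⟨h8.1, h9⟩
          · exact (h7.trans hjb).ne (inj _ _ h9)
          · exact h4 c h6 h7 ⟨h9, h8.2⟩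
        · intro c h6 h7
          exact h2 c (haj.trans h6) h7
      · refine ⟨⟨h3, ?_⟩, h3.trans h1, ?_⟩
        · intro c h6 h7
          have := h4 c h6 (h7.trans hjb)
          rwa [g3 c h6 (h7.trans hjb) h7.ne] at this
        · intro c h6 h7 h8
          have := h4 c (haj.trans h6) h7
          rw [g3 c (haj.trans h6) h7 h6.ne'] at this
          rcases lt_trichotomy (u c) (u j) with h9 | h9 | h9
          · exact this ⟨h8.1, h9⟩
          · exact h6.ne' (inj _ _ h9)
          · exact h2 c h6 h7 ⟨h9, h8.2⟩
  · rintro ⟨⟨⟨h1, h2⟩, h3, h4⟩, ⟨h5, h6⟩, h7⟩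
    exact absurd h3 (not_lt_of_gt h5)

theorem tau_braid {N : ℕ} {a j b : Fin N} (haj : a < j) (hjb : j < b) :
    tau j b * tau a j = tau a j * tau a b + tau a b * tau j b := by
  refine LinearMap.ext fun f => funext fun w => ?_
  have hab := haj.trans hjb
  simp only [Module.End.mul_apply, LinearMap.add_apply, Pi.add_apply, tau_apply]
  set u := w * swap j b * swap a j with hu
  have e1 : w * swap j b = u * swap a j := by rw [hu, mul_assoc _ _ (swap a j), swap_mul_self, mul_one]
  have s1 : swap j b * swap a j = swap a j * swap a b := by
    rw [mul_swap_eq_swap_mul (swap a j) a b, swap_apply_left,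
      swap_apply_of_ne_of_ne hab.ne' hjb.ne']
  have s2 : swap j b * swap a j = swap a b * swap j b := by
    rw [mul_swap_eq_swap_mul (swap j b) a j, swap_apply_left,
      swap_apply_of_ne_of_ne haj.ne hab.ne]
  have e2 : w * swap a j * swap a b = u := by rw [hu, mul_assoc, mul_assoc, s1]
  have e3 : w * swap a b * swap j b = u := by rw [hu, mul_assoc, mul_assoc, s2]
  have e4 : w * swap a j = u * swap a b := by
    rw [← e2, mul_assoc _ _ (swap a b), swap_mul_self, mul_one]
  have e5 : w * swap a b = u * swap j b := by
    rw [← e3, mul_assoc _ _ (swap j b), swap_mul_self, mul_one]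
  rw [e2, e3, e1, e4, e5]
  have := braid_cov u haj hjb
  by_cases A1 : Cov u a j <;> by_cases A2 : Cov (u * swap a j) j b <;>
  by_cases A3 : Cov u a b <;> by_cases A4 : Cov (u * swap a b) a j <;>
  by_cases A5 : Cov u j b <;> by_cases A6 : Cov (u * swap j b) a b <;>
  simp [A1, A2, A3, A4, A5, A6] at this ⊢

theorem comm_cov_aux {N : ℕ} (u : Perm (Fin N)) {a b c d : Fin N} (hac : a ≠ c) (had : a ≠ d)
    (hbc : b ≠ c) (hbd : b ≠ d) (h : Cov u a b) (h' : Cov (u * swap a b) c d) :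
    Cov u c d ∧ Cov (u * swap c d) a b := by
  obtain ⟨h1, h2, h3⟩ := h
  obtain ⟨h4, h5, h6⟩ := h'
  rw [mul_swap_ne _ hac.symm hbc.symm, mul_swap_ne _ had.symm hbd.symm] at h5
  simp only [mul_swap_ne _ hac.symm hbc.symm, mul_swap_ne _ had.symm hbd.symm] at h6
  have n1 : u a ≠ u c := fun h => hac (u.injective h)
  have n2 : u a ≠ u d := fun h => had (u.injective h)
  have n3 : u b ≠ u c := fun h => hbc (u.injective h)
  have n4 : u b ≠ u d := fun h => hbd (u.injective h)
  have k1 := h3 c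
  have k2 := h3 d
  have k3 := h6 a
  have k4 := h6 b
  rw [mul_swap_left] at k3
  rw [mul_swap_right] at k4
  refine ⟨⟨h4, h5, ?_⟩, h1, ?_, ?_⟩
  · intro e he1 he2
    by_cases ea : e = a
    · subst ea
      simp only [Fin.lt_def, Fin.ext_iff, ne_eq] at *
      grind
    · by_cases eb : e = b
      · subst eb
        simp only [Fin.lt_def, Fin.ext_iff, ne_eq] at *
        grind
      · have := h6 e he1 he2
        rwa [mul_swap_ne _ ea eb] at this
  · rwa [mul_swap_ne _ hac had, mul_swap_ne _ hbc hbd]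
  · rw [mul_swap_ne _ hac had, mul_swap_ne _ hbc hbd]
    intro e he1 he2
    by_cases ec : e = c
    · subst ec
      rw [mul_swap_left]
      simp only [Fin.lt_def, Fin.ext_iff, ne_eq] at *
      grind
    · by_cases ed : e = d
      · subst ed
        rw [mul_swap_right]
        simp only [Fin.lt_def, Fin.ext_iff, ne_eq] at *
        grind
      · rw [mul_swap_ne _ ec ed]
        exact h3 e he1 he2

theorem tau_comm {N : ℕ} {a b c d : Fin N} (hac : a ≠ c) (had : a ≠ d)
    (hbc : b ≠ c) (hbd : b ≠ d) : tau a b * tau c d = tau c d * tau a b := by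
  refine LinearMap.ext fun f => funext fun w => ?_
  simp only [Module.End.mul_apply, tau_apply]
  have hd : swap a b * swap c d = swap c d * swap a b := by
    have : Perm.Disjoint (swap a b) (swap c d) := by
      intro x
      by_cases h1 : x = a
      · subst h1; right; exact swap_apply_of_ne_of_ne hac had
      · by_cases h2 : x = b
        · subst h2; right; exact swap_apply_of_ne_of_ne hbc hbd
        · left; exact swap_apply_of_ne_of_ne h1 h2
    exact this.commute
  set u := w * swap a b * swap c d with hu
  have e1 : w * swap a b = u * swap c d := by
    rw [hu, mul_assoc _ _ (swap c d), swap_mul_self, mul_one]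
  have e2 : w * swap c d * swap a b = u := by rw [hu, mul_assoc, mul_assoc, hd]
  have e3 : w * swap c d = u * swap a b := by
    rw [← e2, mul_assoc _ _ (swap a b), swap_mul_self, mul_one]
  rw [e2, e1, e3]
  have i1 := @comm_cov_aux N u a b c d hac had hbc hbd
  have i2 := @comm_cov_aux N u c d a b hac.symm hbc.symm had.symm hbd.symm
  by_cases A1 : Cov u a b <;> by_cases A2 : Cov (u * swap a b) c d <;>
  by_cases A3 : Cov u c d <;> by_cases A4 : Cov (u * swap c d) a b <;>
  simp [A1, A2, A3, A4] at i1 i2 ⊢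



/-- The noncommutative elementary operators. -/
noncomputable def EE {N : ℕ} : ℕ → Finset (Fin N) → List (Fin N) →
    Module.End ℤ (Perm (Fin N) → ℤ)
  | 0, _, _ => 1
  | _ + 1, _, [] => 0
  | m + 1, I, b :: J => EE (m + 1) I J + ∑ a ∈ I, tau a b * EE m (I.erase a) (b :: J)
termination_by m _ J => (m, J.length)

theorem EE_zero {N : ℕ} (I : Finset (Fin N)) (J : List (Fin N)) : EE 0 I J = 1 := by
  rw [EE]
theorem EE_nil {N : ℕ} (m : ℕ) (I : Finset (Fin N)) : EE (m + 1) I [] = 0 := by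
  rw [EE]
theorem EE_cons {N : ℕ} (m : ℕ) (I : Finset (Fin N)) (b : Fin N) (J : List (Fin N)) :
    EE (m + 1) I (b :: J) = EE (m + 1) I J + ∑ a ∈ I, tau a b * EE m (I.erase a) (b :: J) := by
  rw [EE]

theorem EE_swap {N : ℕ} (m : ℕ) : ∀ (I : Finset (Fin N)) (j b : Fin N) (J : List (Fin N)),
    j ≠ b → j ∉ I → b ∉ I → EE m I (j :: b :: J) = EE m I (b :: j :: J) := by
  induction m using Nat.strong_induction_on with
  | _ m ih =>
  intro I j b J hjb hj hb
  rcases m with _ | m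
  · simp [EE_zero]
  rcases m with _ | m
  · simp only [EE_cons, EE_zero]
    abel
  have h1 : ∀ a ∈ I, EE (m + 1) (I.erase a) (j :: b :: J) =
      EE (m + 1) (I.erase a) (j :: J) + ∑ c ∈ I.erase a, tau c b * EE m ((I.erase a).erase c) (b :: j :: J) := by
    intro a ha
    rw [ih (m + 1) (by omega) _ _ _ _ hjb (fun h => hj (Finset.mem_of_mem_erase h))
      (fun h => hb (Finset.mem_of_mem_erase h)), EE_cons]
  have h2 : ∀ a ∈ I, EE (m + 1) (I.erase a) (b :: j :: J) =
      EE (m + 1) (I.erase a) (b :: J) + ∑ c ∈ I.erase a, tau c j * EE m ((I.erase a).erase c) (b :: j :: J) := by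
    intro a ha
    rw [ih (m + 1) (by omega) _ _ _ _ hjb.symm (fun h => hb (Finset.mem_of_mem_erase h))
      (fun h => hj (Finset.mem_of_mem_erase h)), EE_cons]
    congr 1
    refine Finset.sum_congr rfl fun c hc => ?_
    rw [ih m (by omega) _ _ _ _ hjb (fun h => hj (Finset.mem_of_mem_erase (Finset.mem_of_mem_erase h)))
      (fun h => hb (Finset.mem_of_mem_erase (Finset.mem_of_mem_erase h)))]
  rw [EE_cons, EE_cons, EE_cons _ _ b, EE_cons _ _ j]
  have h1' : ∑ a ∈ I, tau a j * EE (m + 1) (I.erase a) (j :: b :: J) =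
      ∑ a ∈ I, tau a j * (EE (m + 1) (I.erase a) (j :: J) +
        ∑ c ∈ I.erase a, tau c b * EE m ((I.erase a).erase c) (b :: j :: J)) :=
    Finset.sum_congr rfl (fun a ha => by rw [h1 a ha])
  have h2' : ∑ a ∈ I, tau a b * EE (m + 1) (I.erase a) (b :: j :: J) =
      ∑ a ∈ I, tau a b * (EE (m + 1) (I.erase a) (b :: J) +
        ∑ c ∈ I.erase a, tau c j * EE m ((I.erase a).erase c) (b :: j :: J)) :=
    Finset.sum_congr rfl (fun a ha => by rw [h2 a ha])
  rw [h1', h2']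
  simp only [mul_add, Finset.sum_add_distrib, Finset.mul_sum]
  have h3 : ∑ a ∈ I, ∑ c ∈ I.erase a, tau a j * (tau c b * EE m ((I.erase a).erase c) (b :: j :: J))
    = ∑ a ∈ I, ∑ c ∈ I.erase a, tau a b * (tau c j * EE m ((I.erase a).erase c) (b :: j :: J)) := by
    rw [Finset.sum_comm' (t' := I) (s' := fun c => I.erase c)]
    · refine Finset.sum_congr rfl fun a ha => Finset.sum_congr rfl fun c hc => ?_
      rw [← mul_assoc, ← mul_assoc, Finset.erase_right_comm]
      rw [tau_comm (a := c) (b := j) (c := a) (d := b)]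
      · exact (Finset.mem_erase.1 hc).1
      · rintro rfl; exact hb (Finset.mem_of_mem_erase hc)
      · rintro rfl; exact hj ha
      · exact hjb
    · intro x y
      simp only [Finset.mem_erase]
      tauto
  rw [h3]
  abel

theorem EE_perm {N : ℕ} {J J' : List (Fin N)} (hp : J.Perm J') :
    ∀ (m : ℕ) (I : Finset (Fin N)), J.Nodup → (∀ b ∈ J, b ∉ I) → EE m I J = EE m I J' := by
  induction hp with
  | nil => intros; rfl
  | @cons b J J' h ih =>
    intro m
    induction m with
    | zero => intros; simp [EE_zero]
    | succ m ihm =>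
      intro I hn hI
      rw [EE_cons, EE_cons, ih (m + 1) I (List.nodup_cons.1 hn).2
        (fun c hc => hI c (List.mem_cons_of_mem _ hc))]
      congr 1
      refine Finset.sum_congr rfl fun a ha => ?_
      rw [ihm _ hn (fun c hc h => hI c hc (Finset.mem_of_mem_erase h))]
  | swap b c J =>
    intro m I hn hI
    refine EE_swap m I c b J ?_ (hI _ (by simp)) (hI _ (by simp))
    rintro rfl
    simp at hn
  | trans h1 h2 ih1 ih2 =>
    intro m I hn hI
    rw [ih1 m I hn hI, ih2 m I (h1.nodup_iff.1 hn) (fun b hb => hI b (h1.mem_iff.2 hb))]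

theorem EE_single_aux {N : ℕ} (j : Fin N) (m : ℕ) : ∀ (I : Finset (Fin N)) (a : Fin N), a ∈ I →
    (∀ c ∈ I, c < j) → ∀ (f : Perm (Fin N) → ℤ) (v : Perm (Fin N)), v a < v j →
    EE m I [j] f v = EE m (I.erase a) [j] f v := by
  induction m with
  | zero => intros; simp [EE_zero]
  | succ m ih =>
    intro I a ha hI f v hv
    simp only [EE_cons, EE_nil, zero_add, LinearMap.sum_apply, Finset.sum_apply,
      Module.End.mul_apply, tau_apply]
    rw [← Finset.add_sum_erase _ _ ha, if_neg, zero_add]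
    · refine Finset.sum_congr rfl fun c hc => ?_
      have hca : c ≠ a := (Finset.mem_erase.1 hc).1
      have hcI := (Finset.mem_erase.1 hc).2
      split_ifs with h
      · rw [ih (I.erase c) a (Finset.mem_erase.2 ⟨hca.symm, ha⟩)
          (fun d hd => hI d (Finset.mem_of_mem_erase hd)), Finset.erase_right_comm]
        have := h.2.1
        rw [mul_swap_left, mul_swap_right] at this
        rw [mul_swap_right, mul_swap_ne _ hca.symm (hI a ha).ne]
        exact hv.trans this
      · rfl
    · intro h
      have := h.2.1
      rw [mul_swap_left, mul_swap_right] at this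
      exact absurd hv (not_lt_of_gt this)

theorem EE_single {N : ℕ} (j : Fin N) (m : ℕ) (I : Finset (Fin N)) (a : Fin N) (ha : a ∈ I)
    (hI : ∀ c ∈ I, c < j) : tau a j * EE m I [j] = tau a j * EE m (I.erase a) [j] := by
  refine LinearMap.ext fun f => funext fun w => ?_
  simp only [Module.End.mul_apply, tau_apply]
  split_ifs with h
  · exact EE_single_aux j m I a ha hI f _ h.2.1
  · rfl

noncomputable def theta {N : ℕ} (I : Finset (Fin N)) (j : Fin N) (J : List (Fin N)) :
    Module.End ℤ (Perm (Fin N) → ℤ) :=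
  (J.map (tau j)).sum - ∑ a ∈ I, tau a j

theorem sum_insert_erase {N : ℕ} {A : Type*} [AddCommMonoid A] (I : Finset (Fin N)) (j : Fin N)
    (hj : j ∉ I) (g : Fin N → Finset (Fin N) → A) :
    ∑ a ∈ insert j I, g a ((insert j I).erase a) = g j I + ∑ a ∈ I, g a (insert j (I.erase a)) := by
  rw [Finset.sum_insert hj, Finset.erase_insert hj]
  congr 1
  refine Finset.sum_congr rfl fun a ha => ?_
  rw [Finset.erase_insert_of_ne]
  rintro rfl; exact hj ha

theorem tau_theta {N : ℕ} (I : Finset (Fin N)) (j b : Fin N) (J : List (Fin N)) (a : Fin N)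
    (ha : a ∈ I) (hI : ∀ c ∈ I, c < j) (hb : j < b) (hJ : ∀ c ∈ J, j < c ∧ c ≠ b) :
    tau a b * theta (I.erase a) j (b :: J) = theta I j J * tau a b + tau j b * tau a j := by
  have haj := hI a ha
  have h1 : tau a b * (J.map (tau j)).sum = (J.map (tau j)).sum * tau a b := by
    rw [← List.sum_map_mul_left, ← List.sum_map_mul_right]
    congr 1
    refine List.map_congr_left fun c hc => ?_
    have := hJ c hc
    exact tau_comm haj.ne (haj.trans this.1).ne hb.ne' this.2.symm
  have h2 : tau a b * ∑ c ∈ I.erase a, tau c j = (∑ c ∈ I.erase a, tau c j) * tau a b := by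
    rw [Finset.mul_sum, Finset.sum_mul]
    refine Finset.sum_congr rfl fun c hc => ?_
    have hca := Finset.mem_erase.1 hc
    exact tau_comm hca.1.symm haj.ne ((hI c hca.2).trans hb).ne' hb.ne'
  have h3 := tau_braid haj hb
  rw [theta, theta, List.map_cons, List.sum_cons, mul_sub, mul_add, h1, h2, sub_mul,
    ← Finset.add_sum_erase _ _ ha, add_mul, h3]
  abel

theorem EE_main {N : ℕ} (j : Fin N) (m : ℕ) : ∀ (J : List (Fin N)) (I : Finset (Fin N)),
    (∀ c ∈ I, c < j) → (∀ c ∈ J, j < c) → J.Nodup →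
    EE (m + 1) (insert j I) J = EE (m + 1) I (j :: J) + theta I j J * EE m I (j :: J) := by
  induction m with
  | zero =>
    intro J
    induction J with
    | nil =>
      intro I hI _ _
      simp [EE_cons, EE_nil, EE_zero, theta]
    | cons b J ihJ =>
      intro I hI hJ hn
      have hj : j ∉ I := fun h => lt_irrefl _ (hI j h)
      have := ihJ I hI (fun c hc => hJ c (List.mem_cons_of_mem _ hc)) (List.nodup_cons.1 hn).2
      rw [EE_cons, this]
      simp only [EE_cons, EE_zero, mul_one, theta, List.map_cons, List.sum_cons,
        Finset.sum_insert hj]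
      abel
  | succ m ihm =>
    intro J
    induction J with
    | nil =>
      intro I hI _ _
      rw [EE_nil, EE_cons, EE_nil, theta, Finset.sum_congr rfl
        (fun a ha => (EE_single j (m+1) I a ha hI).symm), ← Finset.sum_mul]
      simp
    | cons b J ihJ =>
      intro I hI hJ hn
      have hj : j ∉ I := fun h => lt_irrefl _ (hI j h)
      have hjb : j < b := hJ b (by simp)
      have hJ' : ∀ c ∈ J, j < c := fun c hc => hJ c (List.mem_cons_of_mem _ hc)
      have hn' := List.nodup_cons.1 hn
      have hJ'' : ∀ c ∈ J, j < c ∧ c ≠ b := fun c hc =>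
        ⟨hJ' c hc, by rintro rfl; exact hn'.1 hc⟩
      have hbI : b ∉ I := fun h => lt_irrefl _ ((hI b h).trans hjb)
      have e1 := ihJ I hI hJ' hn'.2
      have e2 : ∀ a ∈ I, tau a b * EE (m + 1) (insert j (I.erase a)) (b :: J) =
          tau a b * EE (m + 1) (I.erase a) (b :: j :: J) +
          theta I j J * (tau a b * EE m (I.erase a) (b :: j :: J)) +
          tau j b * (tau a j * EE m (I.erase a) (j :: b :: J)) := by
        intro a ha
        have hs1 : ∀ m, EE m (I.erase a) (j :: b :: J) = EE m (I.erase a) (b :: j :: J) := fun m =>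
          EE_swap m _ j b J hjb.ne (fun h => hj (Finset.mem_of_mem_erase h))
            (fun h => hbI (Finset.mem_of_mem_erase h))
        rw [ihm (b :: J) (I.erase a) (fun c hc => hI c (Finset.mem_of_mem_erase hc)) hJ hn,
          mul_add, ← mul_assoc, tau_theta I j b J a ha hI hjb hJ'', add_mul, hs1, hs1]
        simp only [mul_assoc]
        abel
      rw [EE_cons, sum_insert_erase I j hj (fun a K => tau a b * EE (m + 1) K (b :: J)),
        Finset.sum_congr rfl e2, e1]
      have e3 : EE (m + 2) I (j :: b :: J) = EE (m + 2) I (j :: J) +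
          ∑ a ∈ I, tau a b * EE (m + 1) (I.erase a) (b :: j :: J) := by
        rw [EE_swap _ _ _ _ _ hjb.ne hj hbI, EE_cons]
      have e4 : EE (m + 1) I (j :: b :: J) = EE (m + 1) I (j :: J) +
          ∑ a ∈ I, tau a b * EE m (I.erase a) (b :: j :: J) := by
        rw [EE_swap _ _ _ _ _ hjb.ne hj hbI, EE_cons]
      have e5 : theta I j (b :: J) = theta I j J + tau j b := by
        simp only [theta, List.map_cons, List.sum_cons]; abel
      have e6 : theta I j (b :: J) * EE (m + 1) I (j :: b :: J) =
          theta I j J * (EE (m + 1) I (j :: J) + ∑ a ∈ I, tau a b * EE m (I.erase a) (b :: j :: J)) +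
          tau j b * (EE (m + 1) I (b :: J) + ∑ a ∈ I, tau a j * EE m (I.erase a) (j :: b :: J)) := by
        rw [e5, add_mul, ← e4, ← EE_cons]
      rw [e6, e3]
      simp only [mul_add, Finset.sum_add_distrib, Finset.mul_sum]
      abel



theorem EE_cons_apply {N : ℕ} (m : ℕ) (I : Finset (Fin N)) (b : Fin N) (J : List (Fin N))
    (f : Perm (Fin N) → ℤ) (w : Perm (Fin N)) :
    EE (m + 1) I (b :: J) f w = EE (m + 1) I J f w +
      ∑ a ∈ I, if Cov (w * swap a b) a b then EE m (I.erase a) (b :: J) f (w * swap a b) else 0 := by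
  simp only [EE_cons, LinearMap.add_apply, LinearMap.sum_apply, Finset.sum_apply, Pi.add_apply,
      Module.End.mul_apply, tau_apply]

theorem EE_supp {N : ℕ} (w : Perm (Fin N)) (m : ℕ) :
    ∀ (J : List (Fin N)) (I : Finset (Fin N)) (w' : Perm (Fin N)),
    EE m I J (Pi.single w 1) w' ≠ 0 → ∀ x, x ∉ I → x ∉ J → w' x = w x := by
  induction m with
  | zero =>
    intro J I w' h x _ _
    simp only [EE_zero, Module.End.one_apply] at h
    by_cases hw : w' = w
    · rw [hw]
    · simp [Pi.single_apply, hw] at h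
  | succ m ihm =>
    intro J
    induction J with
    | nil => intro I w' h; simp [EE_nil] at h
    | cons b J ihJ =>
      intro I w' h x hxI hxJ
      rw [EE_cons_apply] at h
      simp only [List.mem_cons, not_or] at hxJ
      by_cases h1 : EE (m + 1) I J (Pi.single w 1) w' = 0
      · rw [h1, zero_add] at h
        obtain ⟨a, ha, h2⟩ := Finset.exists_ne_zero_of_sum_ne_zero h
        split_ifs at h2 with h3
        · have := ihm (b :: J) (I.erase a) _ h2 x (fun h => hxI (Finset.mem_of_mem_erase h))
            (by simp [hxJ])
          rw [mul_swap_ne] at this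
          · exact this
          · rintro rfl; exact hxI ha
          · exact hxJ.1
        · exact absurd rfl h2
      · exact ihJ I w' h1 x hxI hxJ.2

theorem EE_zero_one {N : ℕ} (w : Perm (Fin N)) (m : ℕ) :
    ∀ (J : List (Fin N)) (I : Finset (Fin N)) (w' : Perm (Fin N)), J.Nodup → (∀ b ∈ J, b ∉ I) →
    EE m I J (Pi.single w 1) w' = 0 ∨ EE m I J (Pi.single w 1) w' = 1 := by
  induction m with
  | zero =>
    intro J I w' _ _
    simp only [EE_zero, Module.End.one_apply, Pi.single_apply]
    split_ifs <;> simp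
  | succ m ihm =>
    intro J
    induction J with
    | nil => intro I w' _ _; simp [EE_nil]
    | cons b J ihJ =>
      intro I w' hn hI
      have hn' := List.nodup_cons.1 hn
      have hbI : b ∉ I := hI b (by simp)
      have hterm : ∀ a ∈ I, w' b ≠ w a → (if Cov (w' * swap a b) a b then
          EE m (I.erase a) (b :: J) (Pi.single w 1) (w' * swap a b) else 0) = 0 := by
        intro a ha hne
        split_ifs with h
        · by_contra h1
          have := EE_supp w m _ _ _ h1 a (by simp) (fun h => hI a h ha)
          rw [mul_swap_left] at this
          exact hne this
        · rfl
      rw [EE_cons_apply]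
      by_cases h1 : EE (m + 1) I J (Pi.single w 1) w' = 0
      · rw [h1, zero_add]
        by_cases h2 : ∃ a ∈ I, w' b = w a
        · obtain ⟨a, ha, h2⟩ := h2
          rw [Finset.sum_eq_single a]
          · split_ifs
            · exact ihm (b :: J) (I.erase a) _ hn (fun c hc h => hI c hc (Finset.mem_of_mem_erase h))
            · left; rfl
          · intro c hc hca
            refine hterm c hc ?_
            rw [h2]
            exact fun h => hca (w.injective h).symm
          · intro h; exact absurd ha h
        · push Not at h2
          left
          exact Finset.sum_eq_zero fun a ha => hterm a ha (h2 a ha)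
      · rw [Finset.sum_eq_zero, add_zero]
        · exact ihJ I w' hn'.2 (fun c hc => hI c (List.mem_cons_of_mem _ hc))
        · intro a ha
          refine hterm a ha ?_
          rw [EE_supp w _ _ _ _ h1 b hbI hn'.1]
          intro h
          have := w.injective h
          subst this
          exact hbI ha

/-- Chains with pairwise distinct left indices. -/
inductive GP {N : ℕ} (J : List (Fin N)) (w : Perm (Fin N)) :
    Finset (Fin N) → ℕ → Perm (Fin N) → Prop
  | zero (I : Finset (Fin N)) : GP J w I 0 w
  | step (I : Finset (Fin N)) (m : ℕ) (u : Perm (Fin N)) (a b : Fin N) (ha : a ∈ I) (hb : b ∈ J)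
      (hc : Cov u a b) (h : GP J w (I.erase a) m u) : GP J w I (m + 1) (u * swap a b)

theorem GP.mono {N : ℕ} {J J' : List (Fin N)} {w : Perm (Fin N)} {I : Finset (Fin N)} {m : ℕ}
    {w' : Perm (Fin N)} (h : GP J w I m w') : ∀ (_ : ∀ b ∈ J, b ∈ J') (I' : Finset (Fin N))
    (_ : I ⊆ I'), GP J' w I' m w' := by
  induction h with
  | zero I => intro hJ I' hI; exact GP.zero I'
  | step I m u a b ha hb hc h ih =>
    intro hJ I' hI
    exact GP.step I' m u a b (hI ha) (hJ b hb) hc (ih hJ _ (Finset.erase_subset_erase a hI))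

theorem GP_of_EE {N : ℕ} (w : Perm (Fin N)) (m : ℕ) :
    ∀ (J : List (Fin N)) (I : Finset (Fin N)) (w' : Perm (Fin N)),
    EE m I J (Pi.single w 1) w' ≠ 0 → GP J w I m w' := by
  induction m with
  | zero =>
    intro J I w' h
    simp only [EE_zero, Module.End.one_apply] at h
    by_cases hw : w' = w
    · rw [hw]; exact GP.zero I
    · simp [Pi.single_apply, hw] at h
  | succ m ihm =>
    intro J
    induction J with
    | nil => intro I w' h; simp [EE_nil] at h
    | cons b J ihJ =>
      intro I w' h
      rw [EE_cons_apply] at h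
      by_cases h1 : EE (m + 1) I J (Pi.single w 1) w' = 0
      · rw [h1, zero_add] at h
        obtain ⟨a, ha, h2⟩ := Finset.exists_ne_zero_of_sum_ne_zero h
        split_ifs at h2 with h3
        · have := GP.step I m _ a b ha (by simp) h3 (ihm (b :: J) (I.erase a) _ h2)
          rwa [mul_assoc, swap_mul_self, mul_one] at this
        · exact absurd rfl h2
      · exact (ihJ I w' h1).mono (fun c hc => List.mem_cons_of_mem _ hc) I (Finset.Subset.refl _)

theorem EE_of_GP {N : ℕ} {J : List (Fin N)} {w : Perm (Fin N)} {I : Finset (Fin N)} {m : ℕ}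
    {w' : Perm (Fin N)} (h : GP J w I m w') (hn : J.Nodup) : (∀ b ∈ J, b ∉ I) →
    EE m I J (Pi.single w 1) w' = 1 := by
  induction h with
  | zero I => intro _; simp [EE_zero]
  | step I m u a b ha hb hc h ih =>
    intro hI
    have hI' : ∀ b ∈ J, b ∉ I.erase a := fun c hc h => hI c hc (Finset.mem_of_mem_erase h)
    have ih := ih hI'
    have hp := List.perm_cons_erase hb
    have hn2 := hp.nodup_iff.1 hn
    have hI2 : ∀ c ∈ b :: J.erase b, c ∉ I := fun c hc => hI c (hp.mem_iff.2 hc)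
    have hI3 : ∀ c ∈ b :: J.erase b, c ∉ I.erase a := fun c hc => hI' c (hp.mem_iff.2 hc)
    have hnn : ∀ (m : ℕ) (J : List (Fin N)) (I : Finset (Fin N)) (w' : Perm (Fin N)), J.Nodup →
        (∀ b ∈ J, b ∉ I) → 0 ≤ EE m I J (Pi.single w 1) w' := by
      intro m J I w' h1 h2
      rcases EE_zero_one w m J I w' h1 h2 with h | h <;> rw [h]
      norm_num
    rcases EE_zero_one w (m + 1) J I (u * swap a b) hn hI with h0 | h0
    · exfalso
      rw [EE_perm hp _ _ hn hI, EE_cons_apply] at h0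
      rw [EE_perm hp _ _ hn hI'] at ih
      have t1 := hnn (m + 1) (J.erase b) I (u * swap a b) (List.nodup_cons.1 hn2).2
        (fun c hc => hI2 c (List.mem_cons_of_mem _ hc))
      have t2 := Finset.single_le_sum (s := I) (f := fun a' =>
        if Cov (u * swap a b * swap a' b) a' b then EE m (I.erase a') (b :: J.erase b)
          (Pi.single w 1) (u * swap a b * swap a' b) else 0) (by
            intro c _
            split_ifs
            · exact hnn m _ _ _ hn2 (fun d hd h => hI2 d hd (Finset.mem_of_mem_erase h))
            · exact le_rfl) ha
      beta_reduce at t2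
      rw [mul_assoc u, swap_mul_self, mul_one, if_pos hc, ih] at t2
      simp only [mul_assoc] at t2 h0
      linarith
    · exact h0

/-! Translation to `RelC`. -/

theorem tProd_succ {N : ℕ} [NeZero N] (a b : ℕ → ℕ) (i : ℕ) :
    tProd N a b (i + 1) = tProd N a b i * t N (a i) (b i) := by
  simp [tProd, List.range_succ]

theorem tProd_congr {N : ℕ} [NeZero N] {a b a' b' : ℕ → ℕ} (i : ℕ)
    (h : ∀ j < i, a j = a' j ∧ b j = b' j) : tProd N a b i = tProd N a' b' i := by
  unfold tProd
  congr 1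
  refine List.map_congr_left fun j hj => ?_
  rw [(h j (List.mem_range.1 hj)).1, (h j (List.mem_range.1 hj)).2]

theorem pos_val {N : ℕ} [NeZero N] {j : ℕ} (h1 : 1 ≤ j) (h2 : j ≤ N) :
    ((pos N j : Fin N) : ℕ) = j - 1 := by
  simp only [pos]
  exact Nat.mod_eq_of_lt (by omega)

theorem pos_succ {N : ℕ} [NeZero N] (a : Fin N) : pos N (a + 1) = a := by
  ext; rw [pos_val] <;> omega

theorem GP_of_RelC {n k m : ℕ} (hkn : k ≤ n + 1) (w w' : Perm (Fin (n + 1)))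
    (h : RelC (n + 1) k m w w') (I : Finset (Fin (n + 1))) (J : List (Fin (n + 1)))
    (hI : ∀ x, x ∈ I ↔ (x : ℕ) < k) (hJ : ∀ x, x ∈ J ↔ k ≤ (x : ℕ)) : GP J w I m w' := by
  obtain ⟨a, b, ⟨h1, h2⟩, rfl, h3⟩ := h
  have key : ∀ i ≤ m, GP J w ((Finset.range i).image fun j => pos (n + 1) (a j)) i
      (w * tProd (n + 1) a b i) := by
    intro i
    induction i with
    | zero => intro _; simp only [tProd, List.range_zero, List.map_nil, List.prod_nil, mul_one]; exact GP.zero _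
    | succ i ih =>
      intro hi
      have hi' := h1 i (by omega)
      have va := pos_val (N := n + 1) (j := a i) (by omega) (by omega)
      have vb := pos_val (N := n + 1) (j := b i) (by omega) (by omega)
      have hlt : pos (n + 1) (a i) < pos (n + 1) (b i) := by rw [Fin.lt_def]; omega
      rw [tProd_succ, ← mul_assoc]
      refine GP.step _ i _ _ _ ?_ ?_ ?_ ?_
      · exact Finset.mem_image.2 ⟨i, by simp, rfl⟩
      · rw [hJ]; omega
      · rw [← len_swap_iff _ _ _ hlt]
        have e1 := h2 (i + 1) hi
        have e2 := h2 i (by omega)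
        rw [tProd_succ, ← mul_assoc] at e1
        unfold t at e1
        rw [e1, e2]; ring
      · refine (ih (by omega)).mono (fun _ h => h) _ ?_
        intro x hx
        rw [Finset.mem_image] at hx
        obtain ⟨j, hj, rfl⟩ := hx
        rw [Finset.mem_range] at hj
        refine Finset.mem_erase.2 ⟨?_, Finset.mem_image.2 ⟨j, by simp; omega, rfl⟩⟩
        intro he
        have hj' := h1 j (by omega)
        have := congrArg Fin.val he
        rw [va, pos_val (by omega) (by omega)] at this
        exact h3 j i (by omega) (by omega) (by omega) (by omega)
  refine (key m le_rfl).mono (fun _ h => h) _ ?_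
  intro x hx
  rw [Finset.mem_image] at hx
  obtain ⟨j, hj, rfl⟩ := hx
  rw [Finset.mem_range] at hj
  have := h1 j hj
  rw [hI, pos_val (by omega) (by omega)]
  omega

theorem RelC_of_GP {n k : ℕ} {w : Perm (Fin (n + 1))} {J : List (Fin (n + 1))}
    {I : Finset (Fin (n + 1))} {m : ℕ} {w' : Perm (Fin (n + 1))} (h : GP J w I m w')
    (hJ : ∀ x, x ∈ J → k ≤ (x : ℕ)) : (∀ x, x ∈ I → (x : ℕ) < k) →
    ∃ a b : ℕ → ℕ, StepOK (n + 1) k m w a b ∧ w' = w * tProd (n + 1) a b m ∧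
    (∀ i j, i < m → j < m → i ≠ j → a i ≠ a j) ∧ ∀ i < m, ∃ x ∈ I, a i = (x : ℕ) + 1 := by
  induction h with
  | zero I =>
    intro _
    refine ⟨fun _ => 0, fun _ => 0, ⟨by simp, ?_⟩, by simp [tProd], by simp, by simp⟩
    intro i hi
    obtain rfl : i = 0 := by omega
    simp [tProd]
  | step I m u x y hx hy hc h ih =>
    intro hI
    obtain ⟨a, b, ⟨h1, h2⟩, h3, h4, h5⟩ := ih (fun z hz => hI z (Finset.mem_of_mem_erase hz))
    have hcong : ∀ i ≤ m, tProd (n + 1) (Function.update a m (x + 1)) (Function.update b m (y + 1)) i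
        = tProd (n + 1) a b i := by
      intro i hi
      refine tProd_congr i fun j hj => ?_
      rw [Function.update_of_ne (by omega), Function.update_of_ne (by omega)]
      exact ⟨rfl, rfl⟩
    have hlast : w * tProd (n + 1) (Function.update a m (x + 1)) (Function.update b m (y + 1)) (m + 1)
        = u * swap x y := by
      rw [tProd_succ, hcong m le_rfl, ← mul_assoc, ← h3, Function.update_self, Function.update_self, t,
        pos_succ, pos_succ]
    refine ⟨Function.update a m (x + 1), Function.update b m (y + 1), ⟨?_, ?_⟩, hlast.symm, ?_, ?_⟩
    · intro i hi
      by_cases him : i = m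
      · subst him
        simp only [Function.update_self]
        have := hI x hx
        have := hJ y hy
        omega
      · rw [Function.update_of_ne him, Function.update_of_ne him]
        exact h1 i (by omega)
    · intro i hi
      by_cases him : i = m + 1
      · subst him
        rw [hlast, (len_swap_iff u x y hc.1).2 hc, h3, h2 m le_rfl]; ring
      · rw [hcong i (by omega), h2 i (by omega)]
    · have hne : ∀ i < m, a i ≠ x + 1 := by
        intro i hi he
        obtain ⟨z, hz, hz'⟩ := h5 i hi
        exact (Finset.mem_erase.1 hz).1 (Fin.ext (by omega))
      intro i j hi hj hij
      by_cases him : i = m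
      · subst him
        rw [Function.update_self, Function.update_of_ne (Ne.symm hij)]
        exact (hne j (by omega)).symm
      · rw [Function.update_of_ne him]
        by_cases hjm : j = m
        · subst hjm
          rw [Function.update_self]
          exact hne i (by omega)
        · rw [Function.update_of_ne hjm]
          exact h4 i j (by omega) (by omega) hij
    · intro i hi
      by_cases him : i = m
      · subst him
        rw [Function.update_self]
        exact ⟨x, hx, rfl⟩
      · rw [Function.update_of_ne him]
        obtain ⟨z, hz, hz'⟩ := h5 i (by omega)
        exact ⟨z, Finset.mem_of_mem_erase hz, hz'⟩

theorem EE_eq_RelC {n k m : ℕ} (hkn : k ≤ n + 1) (w w' : Perm (Fin (n + 1)))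
    (I : Finset (Fin (n + 1))) (J : List (Fin (n + 1))) (hn : J.Nodup)
    (hI : ∀ x, x ∈ I ↔ (x : ℕ) < k) (hJ : ∀ x, x ∈ J ↔ k ≤ (x : ℕ)) :
    EE m I J (Pi.single w 1) w' = if RelC (n + 1) k m w w' then 1 else 0 := by
  have hd : ∀ b ∈ J, b ∉ I := fun b hb h => by
    rw [hI] at h; rw [hJ] at hb; omega
  split_ifs with h
  · exact EE_of_GP (GP_of_RelC hkn w w' h I J hI hJ) hn hd
  · by_contra h1
    obtain ⟨a, b, h2, h3, h4, _⟩ := RelC_of_GP (GP_of_EE w m J I w' h1) (fun x => (hJ x).1)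
      (fun x => (hI x).1)
    exact h ⟨a, b, h2, h3, h4⟩



/-! Divided differences. -/

/-- Divided difference for an arbitrary pair of positions. -/
noncomputable def dd {N : ℕ} (a b : Fin N) (f : MvPolynomial (Fin N) ℤ) :
    MvPolynomial (Fin N) ℤ :=
  if h : (X a - X b) ∣ (f - rename (⇑(swap a b)) f) then h.choose else 0

theorem divDiff_eq {N : ℕ} [NeZero N] (i : ℕ) (f : MvPolynomial (Fin N) ℤ) :
    divDiff i f = dd (pos N i) (pos N (i + 1)) f := rfl

theorem dd_dvd {N : ℕ} (a b : Fin N) (f : MvPolynomial (Fin N) ℤ) :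
    (X a - X b) ∣ (f - rename (⇑(swap a b)) f) := by
  induction f using MvPolynomial.induction_on with
  | C r => simp
  | add p q hp hq =>
    have : p + q - rename (⇑(swap a b)) (p + q) =
      (p - rename (⇑(swap a b)) p) + (q - rename (⇑(swap a b)) q) := by
      rw [map_add]; ring
    rw [this]; exact dvd_add hp hq
  | mul_X p i hp =>
    have : p * X i - rename (⇑(swap a b)) (p * X i) =
      (p - rename (⇑(swap a b)) p) * X i +
        rename (⇑(swap a b)) p * (X i - X (swap a b i)) := by
      rw [map_mul, rename_X]; ring
    rw [this]
    refine dvd_add (Dvd.dvd.mul_right hp _) (Dvd.dvd.mul_left ?_ _)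
    by_cases h1 : i = a
    · subst h1; simp
    · by_cases h2 : i = b
      · subst h2; rw [swap_apply_right]
        exact ⟨-1, by ring⟩
      · rw [swap_apply_of_ne_of_ne h1 h2]; simp

theorem dd_spec {N : ℕ} (a b : Fin N) (f : MvPolynomial (Fin N) ℤ) :
    (X a - X b) * dd a b f = f - rename (⇑(swap a b)) f := by
  have h := dd_dvd a b f
  unfold dd
  rw [dif_pos h]
  exact h.choose_spec.symm

theorem X_sub_ne {N : ℕ} {a b : Fin N} (h : a ≠ b) :
    (X a - X b : MvPolynomial (Fin N) ℤ) ≠ 0 := by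
  intro e
  exact h (X_injective (sub_eq_zero.1 e))

theorem dd_uniq {N : ℕ} {a b : Fin N} (h : a ≠ b) {f g : MvPolynomial (Fin N) ℤ}
    (hg : (X a - X b) * g = f - rename (⇑(swap a b)) f) : dd a b f = g :=
  mul_left_cancel₀ (X_sub_ne h) ((dd_spec a b f).trans hg.symm)

theorem dd_add {N : ℕ} {a b : Fin N} (h : a ≠ b) (f g : MvPolynomial (Fin N) ℤ) :
    dd a b (f + g) = dd a b f + dd a b g := by
  apply dd_uniq h
  rw [mul_add, dd_spec, dd_spec, map_add]; ring

theorem dd_zero {N : ℕ} {a b : Fin N} (h : a ≠ b) : dd a b (0 : MvPolynomial (Fin N) ℤ) = 0 := by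
  apply dd_uniq h; simp

theorem dd_smul {N : ℕ} {a b : Fin N} (h : a ≠ b) (c : ℤ) (f : MvPolynomial (Fin N) ℤ) :
    dd a b (c • f) = c • dd a b f := by
  apply dd_uniq h
  rw [mul_smul_comm, dd_spec, map_zsmul, smul_sub]

theorem dd_sum {N : ℕ} {a b : Fin N} (h : a ≠ b) {ι : Type*} (s : Finset ι)
    (f : ι → MvPolynomial (Fin N) ℤ) :
    dd a b (∑ i ∈ s, f i) = ∑ i ∈ s, dd a b (f i) := by
  induction s using Finset.induction_on with
  | empty => simp [dd_zero h]
  | insert i s hi ih => rw [Finset.sum_insert hi, Finset.sum_insert hi, dd_add h, ih]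

theorem rename_comp_perm {N : ℕ} (u v : Perm (Fin N)) (f : MvPolynomial (Fin N) ℤ) :
    rename (⇑u) (rename (⇑v) f) = rename (⇑(u * v)) f := by
  rw [rename_rename]; rfl

theorem rename_dd {N : ℕ} {a b : Fin N} (h : a ≠ b) (u : Perm (Fin N))
    (f : MvPolynomial (Fin N) ℤ) :
    rename (⇑u) (dd a b f) = dd (u a) (u b) (rename (⇑u) f) := by
  symm
  apply dd_uniq (fun e => h (u.injective e))
  have := congrArg (rename (⇑u)) (dd_spec a b f)
  rw [map_mul, map_sub, map_sub, rename_X, rename_X] at this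
  rw [this, rename_comp_perm, rename_comp_perm]
  rw [Equiv.mul_swap_eq_swap_mul]

theorem dd_symm {N : ℕ} {a b : Fin N} (h : a ≠ b) (f : MvPolynomial (Fin N) ℤ) :
    dd b a f = - dd a b f := by
  apply dd_uniq h.symm
  rw [swap_comm, ← dd_spec]; ring

theorem dd_dd {N : ℕ} {a b : Fin N} (h : a ≠ b) (f : MvPolynomial (Fin N) ℤ) :
    dd a b (dd a b f) = 0 := by
  apply dd_uniq h
  rw [rename_dd h, swap_apply_left, swap_apply_right, dd_symm h]
  have : dd a b (rename (⇑(swap a b)) f) = - dd a b f := by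
    apply dd_uniq h
    rw [mul_neg, dd_spec, rename_comp_perm, swap_mul_self]
    simp
  rw [this]; ring

/-- Divided differences for disjoint pairs commute. -/
theorem dd_comm {N : ℕ} {a b c d : Fin N} (h : a ≠ b) (h' : c ≠ d)
    (h1 : a ≠ c) (h2 : a ≠ d) (h3 : b ≠ c) (h4 : b ≠ d) (f : MvPolynomial (Fin N) ℤ) :
    dd a b (dd c d f) = dd c d (dd a b f) := by
  apply mul_left_cancel₀ (X_sub_ne h)
  apply mul_left_cancel₀ (X_sub_ne h')
  rw [dd_spec, rename_dd h', swap_apply_of_ne_of_ne h1.symm h3.symm,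
    swap_apply_of_ne_of_ne h2.symm h4.symm, mul_sub, dd_spec, dd_spec, mul_left_comm,
    dd_spec, mul_sub, rename_dd h, swap_apply_of_ne_of_ne h1 h2,
    swap_apply_of_ne_of_ne h3 h4, dd_spec, dd_spec, rename_comp_perm, rename_comp_perm]
  have : swap a b * swap c d = swap c d * swap a b := by
    rw [Equiv.mul_swap_eq_swap_mul, swap_apply_of_ne_of_ne h1.symm h3.symm,
    swap_apply_of_ne_of_ne h2.symm h4.symm]
  rw [this]; ring

theorem dd_braid_aux {N : ℕ} {a b c : Fin N} (h1 : a ≠ b) (h2 : b ≠ c) (h3 : a ≠ c)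
    (f : MvPolynomial (Fin N) ℤ) :
    (X a - X b) * ((X a - X c) * ((X b - X c) * dd a b (dd b c (dd a b f)))) =
      f - rename (⇑(swap a b)) f - rename (⇑(swap b c)) f
        + rename (⇑(swap b c * swap a b)) f + rename (⇑(swap a b * swap b c)) f
        - rename (⇑(swap a c)) f := by
  have e1 : (X b - X c) * dd b c (dd a b f) =
      dd a b f - dd a c (rename (⇑(swap b c)) f) := by
    rw [dd_spec, rename_dd h1, swap_apply_of_ne_of_ne h1 h3, swap_apply_left]
  have e2 : (X a - X c) * dd a c (rename (⇑(swap a b)) (dd a b f)) =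
      rename (⇑(swap a b)) (dd a b f) - rename (⇑(swap a b)) (dd a c (rename (⇑(swap b c)) f)) := by
    have := congrArg (rename (⇑(swap a b))) e1
    rw [map_mul, map_sub, map_sub, rename_X, rename_X, swap_apply_right,
      swap_apply_of_ne_of_ne h3.symm h2.symm, rename_dd h2, swap_apply_right,
      swap_apply_of_ne_of_ne h3.symm h2.symm] at this
    exact this
  have e3 : rename (⇑(swap a b)) (dd b c (dd a b f)) = dd a c (rename (⇑(swap a b)) (dd a b f)) := by
    rw [rename_dd h2, swap_apply_right, swap_apply_of_ne_of_ne h3.symm h2.symm]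
  have e4 : rename (⇑(swap a b)) (dd a c (rename (⇑(swap b c)) f)) =
      dd b c (rename (⇑(swap a b * swap b c)) f) := by
    rw [rename_dd h3, swap_apply_left, swap_apply_of_ne_of_ne h3.symm h2.symm, rename_comp_perm]
  have e5 : rename (⇑(swap a b)) (dd a b f) = dd a b f := by
    have := dd_spec a b (dd a b f)
    rw [dd_dd h1, mul_zero] at this
    exact (sub_eq_zero.1 this.symm).symm
  have s1 := dd_spec a b f
  have s2 := dd_spec a c (rename (⇑(swap b c)) f)
  have s3 := dd_spec b c (rename (⇑(swap a b * swap b c)) f)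
  have s4 := dd_spec a b (dd b c (dd a b f))
  rw [rename_comp_perm] at s2 s3
  have p1 : swap a c * swap b c = swap b c * swap a b := by
    rw [Equiv.mul_swap_eq_swap_mul (swap b c), swap_apply_of_ne_of_ne h1 h3, swap_apply_left]
  have p2 : swap b c * (swap a b * swap b c) = swap a c := by
    rw [← mul_assoc, Equiv.mul_swap_eq_swap_mul (swap b c), swap_apply_of_ne_of_ne h1 h3,
      swap_apply_left, mul_assoc, swap_mul_self, mul_one]
  rw [p1] at s2
  rw [p2] at s3
  rw [e3] at s4
  rw [e4, e5] at e2
  rw [e5] at s4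
  linear_combination (X a - X c) * (X b - X c) * s4 + (X a - X c) * e1 - (X b - X c) * e2
    + s1 - s2 + s3

/-- The braid relation. -/
theorem dd_braid {N : ℕ} {a b c : Fin N} (h1 : a ≠ b) (h2 : b ≠ c) (h3 : a ≠ c)
    (f : MvPolynomial (Fin N) ℤ) :
    dd a b (dd b c (dd a b f)) = dd b c (dd a b (dd b c f)) := by
  have q1 := dd_braid_aux h1 h2 h3 f
  have q2 := dd_braid_aux h2.symm h1.symm h3.symm f
  apply mul_left_cancel₀ (X_sub_ne h1)
  apply mul_left_cancel₀ (X_sub_ne h3)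
  apply mul_left_cancel₀ (X_sub_ne h2)
  rw [swap_comm c b, swap_comm b a, swap_comm c a, dd_symm h2, dd_symm h2,
    dd_symm h1] at q2
  have z : ∀ g, dd b c (-g) = - dd b c g := by
    intro g; rw [← neg_one_zsmul, dd_smul h2, neg_one_zsmul]
  have z' : ∀ g, dd a b (-g) = - dd a b g := by
    intro g; rw [← neg_one_zsmul, dd_smul h1, neg_one_zsmul]
  simp only [z, z', neg_neg] at q2
  linear_combination q1 - q2

theorem dd_mul_sym {N : ℕ} {a b : Fin N} (h : a ≠ b) (f g : MvPolynomial (Fin N) ℤ)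
    (hg : g.IsSymmetric) : dd a b (f * g) = dd a b f * g := by
  apply dd_uniq h
  rw [map_mul, hg (swap a b), ← mul_assoc, dd_spec]; ring

theorem dd_mem {N : ℕ} {a b : Fin N} (h : a ≠ b) (f : MvPolynomial (Fin N) ℤ)
    (hf : f ∈ symIdeal N) : dd a b f ∈ symIdeal N := by
  unfold symIdeal at hf
  induction hf using Submodule.span_induction with
  | mem x hx =>
    have : dd a b x = dd a b 1 * x := by rw [← dd_mul_sym h _ _ hx.1, one_mul]
    rw [this]; exact Ideal.mul_mem_left _ _ (Ideal.subset_span hx)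
  | zero => rw [dd_zero h]; exact Ideal.zero_mem _
  | add x y _ _ hx hy => rw [dd_add h]; exact Ideal.add_mem _ hx hy
  | smul r x hx ih =>
    have : dd a b (r * x) = rename (⇑(swap a b)) r * dd a b x + dd a b r * x := by
      apply dd_uniq h
      have s1 := dd_spec a b r
      have s2 := dd_spec a b x
      rw [map_mul]
      linear_combination rename (⇑(swap a b)) r * s2 + x * s1
    rw [smul_eq_mul, this]
    exact Ideal.add_mem _ (Ideal.mul_mem_left _ _ ih) (Ideal.mul_mem_left _ _ hx)

theorem dd_X_left {N : ℕ} {a b : Fin N} (h : a ≠ b) (f : MvPolynomial (Fin N) ℤ) :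
    dd a b (X a * f) = X b * dd a b f + f := by
  apply dd_uniq h
  have s1 := dd_spec a b f
  rw [map_mul, rename_X, swap_apply_left]
  linear_combination X b * s1

theorem dd_X_right {N : ℕ} {a b : Fin N} (h : a ≠ b) (f : MvPolynomial (Fin N) ℤ) :
    dd a b (X b * f) = X a * dd a b f - f := by
  apply dd_uniq h
  have s1 := dd_spec a b f
  rw [map_mul, rename_X, swap_apply_right]
  linear_combination X a * s1

theorem dd_X_ne {N : ℕ} {a b c : Fin N} (h : a ≠ b) (h1 : c ≠ a) (h2 : c ≠ b)
    (f : MvPolynomial (Fin N) ℤ) :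
    dd a b (X c * f) = X c * dd a b f := by
  apply dd_uniq h
  have s1 := dd_spec a b f
  rw [map_mul, rename_X, swap_apply_of_ne_of_ne h1 h2]
  linear_combination X c * s1



/-! Independence of the reduced word. -/

theorem swap_adj_lt {N : ℕ} {a b x y : Fin N} (hab : (b : ℕ) = a + 1) (hxy : x < y)
    (h : ¬ (x = a ∧ y = b)) : swap a b x < swap a b y := by
  simp only [swap_apply_def, Fin.lt_def, Fin.ext_iff] at *
  split_ifs <;> omega

theorem pos_adj {N : ℕ} [NeZero N] {i : ℕ} (hi : i < N - 1) :
    ((pos N (i + 1) : Fin N) : ℕ) = i ∧ ((pos N (i + 1 + 1) : Fin N) : ℕ) = i + 1 := by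
  simp only [pos]
  constructor
  · exact Nat.mod_eq_of_lt (by omega)
  · exact Nat.mod_eq_of_lt (by omega)

theorem rw_step {N : ℕ} [NeZero N] (u : Perm (Fin N)) (hu : u ≠ 1) :
    ∃ i : ℕ, ((pos N (i + 1) : Fin N) : ℕ) = (pos N i : Fin N) + 1 ∧
      u (pos N (i + 1)) < u (pos N i) ∧
      ∀ fuel, redWordAux N (fuel + 1) u =
        redWordAux N fuel (u * swap (pos N i) (pos N (i + 1))) ++ [i] := by
  rcases hf : ((List.range (N - 1)).map (· + 1)).find?
      (fun i => decide (val u (i + 1) < val u i)) with _ | i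
  · exfalso
    apply hu
    obtain ⟨n, rfl⟩ : ∃ n, N = n + 1 := ⟨N - 1, by have := NeZero.ne N; omega⟩
    apply eq_one_of_no_desc
    intro a b hab hlt
    rw [List.find?_eq_none] at hf
    have ha : (a : ℕ) < n + 1 - 1 := by have := b.2; omega
    have := hf ((a : ℕ) + 1) (by simpa using ha)
    obtain ⟨h1, h2⟩ := pos_adj (N := n + 1) ha
    apply this
    have e1 : (pos (n + 1) ((a : ℕ) + 1) : Fin (n + 1)) = a := Fin.ext h1
    have e2 : (pos (n + 1) ((a : ℕ) + 1 + 1) : Fin (n + 1)) = b := Fin.ext (by omega)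
    apply decide_eq_true
    simp only [val, e1, e2]
    have : (u b : ℕ) < u a := hlt
    omega
  · have h1 := List.find?_some hf
    have h2 := List.mem_of_find?_eq_some hf
    simp only [List.mem_map, List.mem_range] at h2
    obtain ⟨j, hj, rfl⟩ := h2
    obtain ⟨p1, p2⟩ := pos_adj (N := N) hj
    refine ⟨j + 1, by omega, ?_, ?_⟩
    · have h1 := of_decide_eq_true h1
      simp only [val] at h1
      rw [Fin.lt_def]; omega
    · intro fuel
      conv_lhs => unfold redWordAux
      rw [hf]
      rfl

theorem rw_one {N : ℕ} [NeZero N] (fuel : ℕ) : redWordAux N fuel 1 = [] := by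
  cases fuel with
  | zero => rfl
  | succ f =>
    rcases hf : ((List.range (N - 1)).map (· + 1)).find?
      (fun i => decide (val (1 : Perm (Fin N)) (i + 1) < val (1 : Perm (Fin N)) i)) with _ | i
    · unfold redWordAux
      rw [hf]
    · exfalso
      have h1 := List.find?_some hf
      have h2 := List.mem_of_find?_eq_some hf
      simp only [List.mem_map, List.mem_range] at h2
      obtain ⟨j, hj, rfl⟩ := h2
      obtain ⟨p1, p2⟩ := pos_adj (N := N) hj
      have h1 := of_decide_eq_true h1
      simp only [val, Perm.one_apply] at h1
      omega

theorem rw_fuel {N : ℕ} [NeZero N] (fuel : ℕ) : ∀ u : Perm (Fin N), len u ≤ fuel →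
    redWordAux N fuel u = redWordAux N (len u) u := by
  induction fuel with
  | zero => intro u hu; rw [Nat.le_zero.1 hu]
  | succ f ih =>
    intro u hu
    by_cases h1 : u = 1
    · subst h1; rw [rw_one, rw_one]
    · obtain ⟨i, hi, hd, hs⟩ := rw_step u h1
      have hl := len_adj_desc _ _ _ hi hd
      rw [hs f, hl, hs, ih _ (by omega)]

/-- The divided difference attached to a permutation. -/
noncomputable def op {N : ℕ} [NeZero N] (u : Perm (Fin N)) (f : MvPolynomial (Fin N) ℤ) :
    MvPolynomial (Fin N) ℤ := divDiffWord (redWordAux N (len u) u) f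

theorem schub_eq_op {N : ℕ} [NeZero N] (w : Perm (Fin N)) :
    schubertPoly N w = op (w⁻¹ * w0 N) (staircase N) := by
  unfold schubertPoly op redWord
  rw [rw_fuel _ _ (len_le _)]

theorem op_one {N : ℕ} [NeZero N] (f : MvPolynomial (Fin N) ℤ) : op 1 f = f := by
  unfold op; rw [rw_one]; rfl

theorem op_step {N : ℕ} [NeZero N] (u : Perm (Fin N)) (hu : u ≠ 1) :
    ∃ a b : Fin N, (b : ℕ) = a + 1 ∧ u b < u a ∧
      ∀ f, op u f = op (u * swap a b) (dd a b f) := by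
  obtain ⟨i, hi, hd, hs⟩ := rw_step u hu
  refine ⟨_, _, hi, hd, fun f => ?_⟩
  have hl := len_adj_desc _ _ _ hi hd
  unfold op
  rw [hl, hs]
  simp only [divDiffWord, List.foldr_append, List.foldr_cons, List.foldr_nil, divDiff_eq]

theorem op_braid {N : ℕ} [NeZero N] (u : Perm (Fin N))
    (ih : ∀ v : Perm (Fin N), len v < len u → ∀ a b : Fin N, (b : ℕ) = a + 1 → v b < v a →
      ∀ f, op v f = op (v * swap a b) (dd a b f))
    (a b d : Fin N) (hab : (b : ℕ) = a + 1) (hbd : (d : ℕ) = b + 1) (h1 : u b < u a)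
    (h2 : u d < u b) (f : MvPolynomial (Fin N) ℤ) :
    op (u * swap a b) (dd a b f) = op (u * swap b d) (dd b d f) := by
  have nab : a ≠ b := fun e => by rw [e] at hab; omega
  have nbd : b ≠ d := fun e => by rw [e] at hbd; omega
  have nad : a ≠ d := fun e => by rw [e] at hab; omega
  have l1 := len_adj_desc _ _ _ hab h1
  have l2 := len_adj_desc _ _ _ hbd h2
  have d1 : (u * swap a b) d < (u * swap a b) b := by
    simp only [Perm.mul_apply, swap_apply_right, swap_apply_of_ne_of_ne nad.symm nbd.symm]
    exact h2.trans h1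
  have l3 := len_adj_desc _ _ _ hbd d1
  have d2 : (u * swap a b * swap b d) b < (u * swap a b * swap b d) a := by
    simp only [Perm.mul_apply, swap_apply_left, swap_apply_of_ne_of_ne nad.symm nbd.symm,
      swap_apply_of_ne_of_ne nab nad]
    exact h2
  have d1' : (u * swap b d) b < (u * swap b d) a := by
    simp only [Perm.mul_apply, swap_apply_left, swap_apply_of_ne_of_ne nab nad]
    exact h2.trans h1
  have l3' := len_adj_desc _ _ _ hab d1'
  have d2' : (u * swap b d * swap a b) d < (u * swap b d * swap a b) b := by
    simp only [Perm.mul_apply, swap_apply_right, swap_apply_of_ne_of_ne nad.symm nbd.symm,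
      swap_apply_of_ne_of_ne nab nad]
    exact h1
  rw [ih _ (by omega) b d hbd d1, ih _ (by omega) a b hab d2,
    ih (u * swap b d) (by omega) a b hab d1', ih (u * swap b d * swap a b) (by omega) b d hbd d2',
    dd_braid nab nbd nad]
  congr 1
  simp only [mul_assoc]
  congr 1
  have e1 := Equiv.mul_swap_eq_swap_mul (swap a b) b d
  have e2 := Equiv.mul_swap_eq_swap_mul (swap b d) a b
  rw [swap_apply_right, swap_apply_of_ne_of_ne nad.symm nbd.symm] at e1
  rw [swap_apply_left, swap_apply_of_ne_of_ne nab nad] at e2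
  have e3 : swap a b * (swap b d * swap a b) = swap a d := by
    rw [← mul_assoc, e1, mul_assoc, swap_mul_self, mul_one]
  have e4 : swap b d * (swap a b * swap b d) = swap a d := by
    rw [← mul_assoc, e2, mul_assoc, swap_mul_self, mul_one]
  rw [e3, e4]

theorem op_desc {N : ℕ} [NeZero N] (L : ℕ) : ∀ u : Perm (Fin N), len u = L →
    ∀ a b : Fin N, (b : ℕ) = a + 1 → u b < u a → ∀ f, op u f = op (u * swap a b) (dd a b f) := by
  induction L using Nat.strong_induction_on with
  | _ L IH =>
    intro u hL a b hab hd f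
    have ih : ∀ v : Perm (Fin N), len v < len u → ∀ a b : Fin N, (b : ℕ) = a + 1 → v b < v a →
      ∀ f, op v f = op (v * swap a b) (dd a b f) := fun v hv => IH (len v) (by omega) v rfl
    have hu : u ≠ 1 := by
      rintro rfl
      simp only [Perm.one_apply, Fin.lt_def] at hd
      omega
    obtain ⟨c, d, hcd, hd', hs⟩ := op_step u hu
    rw [hs]
    by_cases h1 : a = c
    · subst h1
      have : b = d := Fin.ext (by omega)
      rw [this]
    by_cases h2 : b = c
    · subst h2
      exact (op_braid u ih a b d hab hcd hd hd' f).symm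
    by_cases h3 : d = a
    · subst h3
      exact op_braid u ih c d b hcd hab hd' hd f
    have h4 : b ≠ d := fun e => h1 (Fin.ext (by rw [e] at hab; omega))
    have nab : a ≠ b := fun e => by rw [e] at hab; omega
    have ncd : c ≠ d := fun e => by rw [e] at hcd; omega
    have l1 := len_adj_desc _ _ _ hab hd
    have l2 := len_adj_desc _ _ _ hcd hd'
    have d1 : (u * swap c d) b < (u * swap c d) a := by
      simp only [Perm.mul_apply, swap_apply_of_ne_of_ne h1 (Ne.symm h3),
        swap_apply_of_ne_of_ne h2 h4]
      exact hd
    have d2 : (u * swap a b) d < (u * swap a b) c := by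
      simp only [Perm.mul_apply, swap_apply_of_ne_of_ne (Ne.symm h1) (Ne.symm h2),
        swap_apply_of_ne_of_ne h3 h4.symm]
      exact hd'
    rw [ih _ (by omega) a b hab d1, ih _ (by omega) c d hcd d2,
      dd_comm nab ncd h1 (Ne.symm h3) h2 h4]
    congr 1
    rw [mul_assoc, mul_assoc, Equiv.mul_swap_eq_swap_mul (swap c d),
      swap_apply_of_ne_of_ne h1 (Ne.symm h3), swap_apply_of_ne_of_ne h2 h4]

theorem dd_op {N : ℕ} [NeZero N] (L : ℕ) : ∀ u : Perm (Fin N), len u = L →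
    ∀ a b : Fin N, (b : ℕ) = a + 1 → u⁻¹ a < u⁻¹ b → ∀ f,
      dd a b (op u f) = op (swap a b * u) f := by
  induction L using Nat.strong_induction_on with
  | _ L IH =>
    intro u hL a b hab hd f
    by_cases hu : u = 1
    · subst hu
      rw [op_one, mul_one, op_desc _ (swap a b) rfl a b hab, swap_mul_self, op_one]
      rw [swap_apply_left, swap_apply_right, Fin.lt_def]; omega
    obtain ⟨c, d, hcd, hd', hs⟩ := op_step u hu
    have l2 := len_adj_desc _ _ _ hcd hd'
    have hlt : c < d := by rw [Fin.lt_def]; omega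
    rw [hs, IH _ (by omega) (u * swap c d) rfl a b hab]
    · rw [op_desc _ (swap a b * u) rfl c d hcd, mul_assoc]
      simp only [Perm.mul_apply]
      apply swap_adj_lt hab hd'
      rintro ⟨h1, h2⟩
      rw [← h1, ← h2, Perm.inv_def, symm_apply_apply, symm_apply_apply] at hd
      exact absurd hd hlt.asymm
    · rw [mul_inv_rev, swap_inv]
      simp only [Perm.mul_apply]
      apply swap_adj_lt hcd hd
      rintro ⟨h1, h2⟩
      rw [← h1, ← h2, Perm.inv_def, apply_symm_apply, apply_symm_apply, Fin.lt_def] at hd'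
      omega

theorem schub_desc {N : ℕ} [NeZero N] (w : Perm (Fin N)) (a b : Fin N) (hab : (b : ℕ) = a + 1)
    (h : w b < w a) : dd a b (schubertPoly N w) = schubertPoly N (w * swap a b) := by
  rw [schub_eq_op, schub_eq_op, dd_op _ _ rfl a b hab, mul_inv_rev, swap_inv, mul_assoc]
  rw [mul_inv_rev, inv_inv]
  have e : (w0 N)⁻¹ = w0 N := rfl
  rw [e]
  simp only [Perm.mul_apply]
  exact Fin.rev_lt_rev.2 h

theorem schub_asc {N : ℕ} [NeZero N] (w : Perm (Fin N)) (a b : Fin N) (hab : (b : ℕ) = a + 1)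
    (h : w a < w b) : dd a b (schubertPoly N w) = 0 := by
  have nab : a ≠ b := fun e => by rw [e] at hab; omega
  have := schub_desc (w * swap a b) a b hab (by
    simpa only [Perm.mul_apply, swap_apply_left, swap_apply_right] using h)
  rw [mul_assoc, swap_mul_self, mul_one] at this
  rw [← this, dd_dd nab]

theorem schub_w0 {N : ℕ} [NeZero N] : schubertPoly N (w0 N) = staircase N := by
  rw [schub_eq_op, inv_mul_cancel, op_one]



/-! Vanishing of the top degree. -/

theorem prod_X_sub_eq {N : ℕ} :
    ∏ j : Fin N, (Polynomial.X - Polynomial.C (Ideal.Quotient.mk (symIdeal N) (X j))) =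
      (Polynomial.X ^ N : Polynomial (HRing N)) := by
  have h : ∏ j : Fin N, (Polynomial.X - Polynomial.C (Ideal.Quotient.mk (symIdeal N) (X j))) =
    (∏ j : Fin N, (Polynomial.X - Polynomial.C (X j : MvPolynomial (Fin N) ℤ))).map
      (Ideal.Quotient.mk (symIdeal N)) := by
    rw [Polynomial.map_prod]; simp
  rw [h]
  set P := ∏ j : Fin N, (Polynomial.X - Polynomial.C (X j : MvPolynomial (Fin N) ℤ)) with hP
  have hm : P.Monic := Polynomial.monic_prod_of_monic _ _ fun i _ => Polynomial.monic_X_sub_C _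
  have hdeg : P.natDegree = N := by
    rw [hP, Polynomial.natDegree_prod_of_monic _ _ fun i _ => Polynomial.monic_X_sub_C _]
    simp
  have hsym : ∀ i, (P.coeff i).IsSymmetric := by
    intro i e
    have : P.map (rename (⇑e) : MvPolynomial (Fin N) ℤ →ₐ[ℤ] MvPolynomial (Fin N) ℤ).toRingHom = P := by
      rw [hP, Polynomial.map_prod]
      simp only [Polynomial.map_sub, Polynomial.map_X, Polynomial.map_C]
      rw [← Equiv.prod_comp e (fun j => (Polynomial.X - Polynomial.C (X j : MvPolynomial (Fin N) ℤ)))]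
      simp
    conv_rhs => rw [← this]
    rw [Polynomial.coeff_map]; rfl
  have hconst : P.map (constantCoeff : MvPolynomial (Fin N) ℤ →+* ℤ) = Polynomial.X ^ N := by
    rw [hP, Polynomial.map_prod]; simp
  ext i
  rw [Polynomial.coeff_map, Polynomial.coeff_X_pow]
  split_ifs with hi
  · subst hi
    have : P.coeff i = 1 := by
      have := hm.coeff_natDegree
      rwa [hdeg] at this
    rw [this, map_one]
  · rw [Ideal.Quotient.eq_zero_iff_mem]
    apply Ideal.subset_span
    refine ⟨hsym i, ?_⟩
    rw [← Polynomial.coeff_map, hconst, Polynomial.coeff_X_pow, if_neg hi]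

/-- Partial staircase in the quotient. -/
noncomputable def yy (N i : ℕ) : HRing N :=
  ∏ j ∈ Finset.univ.filter (fun j : Fin N => (j : ℕ) < i),
    Ideal.Quotient.mk (symIdeal N) (X j) ^ (N - 1 - (j : ℕ))

theorem filter_succ {N : ℕ} (i : Fin N) :
    Finset.univ.filter (fun j : Fin N => (j : ℕ) < (i : ℕ) + 1) =
      insert i (Finset.univ.filter (fun j : Fin N => (j : ℕ) < i)) := by
  ext j
  simp only [Finset.mem_filter, Finset.mem_univ, true_and, Finset.mem_insert, Fin.ext_iff]
  omega

theorem yy_mul {N : ℕ} (i : ℕ) : i ≤ N → ∀ j : Fin N, (j : ℕ) < i →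
    yy N i * Ideal.Quotient.mk (symIdeal N) (X j) = 0 := by
  induction i with
  | zero => intro _ j hj; omega
  | succ i ih =>
    intro hi j hj
    have ih := ih (by omega)
    let i' : Fin N := ⟨i, by omega⟩
    have hy : yy N (i + 1) = yy N i * Ideal.Quotient.mk (symIdeal N) (X i') ^ (N - 1 - i) := by
      unfold yy
      rw [show i = (i' : ℕ) from rfl, filter_succ i', Finset.prod_insert (by simp), mul_comm]
    by_cases hji : (j : ℕ) < i
    · rw [hy, mul_right_comm, ih j hji, zero_mul]
    have hj' : j = i' := Fin.ext (by simp [i']; omega)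
    rw [hj']
    rw [hy, mul_assoc, ← pow_succ]
    -- the polynomial identity
    have key : Polynomial.X ^ i * (Polynomial.C (yy N i) *
        ∏ j ∈ Finset.univ.filter (fun j : Fin N => ¬ (j : ℕ) < i),
          (Polynomial.X - Polynomial.C (Ideal.Quotient.mk (symIdeal N) (X j)))) =
        Polynomial.X ^ i * (Polynomial.C (yy N i) * Polynomial.X ^ (N - i)) := by
      have h1 : ∀ s : Finset (Fin N), (∀ j ∈ s, (j : ℕ) < i) → Polynomial.C (yy N i) *
          ∏ j ∈ s, (Polynomial.X - Polynomial.C (Ideal.Quotient.mk (symIdeal N) (X j))) =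
          Polynomial.C (yy N i) * Polynomial.X ^ s.card := by
        intro s
        induction s using Finset.induction_on with
        | empty => intro _; simp
        | insert a s ha IH =>
          intro hs
          have h0 : (Polynomial.C (yy N i) : Polynomial (HRing N)) *
            Polynomial.C (Ideal.Quotient.mk (symIdeal N) (X a)) = 0 := by
            rw [← Polynomial.C_mul, ih a (hs a (Finset.mem_insert_self _ _)), Polynomial.C_0]
          rw [Finset.prod_insert ha, Finset.card_insert_of_notMem ha, pow_succ]
          have IH' := IH (fun j hj => hs j (Finset.mem_insert_of_mem hj))
          linear_combination Polynomial.X * IH' -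
            (∏ j ∈ s, (Polynomial.X - Polynomial.C (Ideal.Quotient.mk (symIdeal N) (X j)))) * h0
      have h2 := h1 (Finset.univ.filter (fun j : Fin N => (j : ℕ) < i)) (by simp)
      have hc : (Finset.univ.filter (fun j : Fin N => (j : ℕ) < i)).card = i := by
        rw [Fin.card_filter_val_lt]; omega
      rw [hc] at h2
      have h3 := prod_X_sub_eq (N := N)
      rw [← Finset.prod_filter_mul_prod_filter_not Finset.univ (fun j : Fin N => (j : ℕ) < i)] at h3
      have h4 : (Polynomial.X : Polynomial (HRing N)) ^ N =
        Polynomial.X ^ i * Polynomial.X ^ (N - i) := by rw [← pow_add]; congr 1; omega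
      rw [h4] at h3
      linear_combination Polynomial.C (yy N i) * h3 -
        (∏ j ∈ Finset.univ.filter (fun j : Fin N => ¬ (j : ℕ) < i),
          (Polynomial.X - Polynomial.C (Ideal.Quotient.mk (symIdeal N) (X j)))) * h2
    have key2 := (Polynomial.isRegular_X_pow (R := HRing N) i).left key
    have key3 := congrArg (Polynomial.eval (Ideal.Quotient.mk (symIdeal N) (X i'))) key2
    simp only [Polynomial.eval_mul, Polynomial.eval_C, Polynomial.eval_pow, Polynomial.eval_X,
      Polynomial.eval_prod, Polynomial.eval_sub] at key3
    rw [Finset.prod_eq_zero (i := i') (by simp [i']) (by simp), mul_zero] at key3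
    rw [show N - 1 - i + 1 = N - i by omega]
    exact key3.symm

theorem X_mul_staircase {N : ℕ} (j : Fin N) : X j * staircase N ∈ symIdeal N := by
  rw [← Ideal.Quotient.eq_zero_iff_mem, map_mul, mul_comm]
  have := yy_mul (N := N) N le_rfl j j.2
  rw [← this]
  congr 1
  unfold staircase yy
  rw [map_prod]
  simp



/-! Monk's rule. -/

/-- Divided difference on coefficient functions. -/
noncomputable def Dop {N : ℕ} (a b : Fin N) : Module.End ℤ (Perm (Fin N) → ℤ) where
  toFun f := fun w => if w a < w b then f (w * swap a b) else 0
  map_add' f g := by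
    funext w; simp only [Pi.add_apply]; split_ifs <;> simp
  map_smul' c f := by
    funext w; simp only [Pi.smul_apply, RingHom.id_apply]; split_ifs <;> simp

theorem Dop_apply {N : ℕ} (a b : Fin N) (f : Perm (Fin N) → ℤ) (w : Perm (Fin N)) :
    Dop a b f w = if w a < w b then f (w * swap a b) else 0 := rfl

/-- The linear combination of Schubert polynomials. -/
noncomputable def Phi {N : ℕ} [NeZero N] : (Perm (Fin N) → ℤ) →ₗ[ℤ] MvPolynomial (Fin N) ℤ where
  toFun f := ∑ w, f w • schubertPoly N w
  map_add' f g := by simp [add_smul, Finset.sum_add_distrib]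
  map_smul' c f := by simp [Finset.mul_sum, mul_assoc]

theorem Phi_apply {N : ℕ} [NeZero N] (f : Perm (Fin N) → ℤ) :
    Phi f = ∑ w, f w • schubertPoly N w := rfl

theorem Phi_single {N : ℕ} [NeZero N] (w : Perm (Fin N)) :
    Phi (Pi.single w 1) = schubertPoly N w := by
  rw [Phi_apply, Finset.sum_eq_single w]
  · simp
  · intro v _ hv; rw [Pi.single_eq_of_ne hv, zero_smul]
  · simp

theorem adj_ne {N : ℕ} {a b : Fin N} (hab : (b : ℕ) = a + 1) : a ≠ b :=
  fun e => by rw [e] at hab; omega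

theorem dd_Phi {N : ℕ} [NeZero N] {a b : Fin N} (hab : (b : ℕ) = a + 1)
    (f : Perm (Fin N) → ℤ) : dd a b (Phi f) = Phi (Dop a b f) := by
  rw [Phi_apply, Phi_apply, dd_sum (adj_ne hab)]
  rw [← Equiv.sum_comp (Equiv.mulRight (swap a b))]
  refine Finset.sum_congr rfl fun w _ => ?_
  rw [Equiv.coe_mulRight, dd_smul (adj_ne hab), Dop_apply]
  split_ifs with h
  · rw [schub_desc _ a b hab (by rw [mul_swap_left, mul_swap_right]; exact h), mul_assoc,
      swap_mul_self, mul_one]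
  · have h' : w b < w a :=
      lt_of_le_of_ne (not_lt.1 h) fun e => adj_ne hab (w.injective e).symm
    rw [schub_asc _ a b hab (by rw [mul_swap_left, mul_swap_right]; exact h'), smul_zero, zero_smul]

theorem cov_adj {N : ℕ} {a b : Fin N} (hab : (b : ℕ) = a + 1) (w : Perm (Fin N)) :
    Cov w a b ↔ w a < w b := by
  constructor
  · exact fun h => h.2.1
  · intro h
    refine ⟨by rw [Fin.lt_def]; omega, h, fun c h1 h2 => ?_⟩
    rw [Fin.lt_def] at h1 h2
    omega

theorem cov_conj {N : ℕ} {a b c d : Fin N} (hab : (b : ℕ) = a + 1) (hcd : c < d)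
    (hne : ¬ (c = a ∧ d = b)) (v : Perm (Fin N)) :
    (Cov v c d ∧ v a < v b) ↔
      ((v * swap c d) a < (v * swap c d) b ∧ Cov (v * swap a b) (swap a b c) (swap a b d)) := by
  have nab := adj_ne hab
  have inj : ∀ x y : Fin N, x ≠ y → v x ≠ v y := fun x y h e => h (v.injective e)
  have hC : Cov (v * swap a b) (swap a b c) (swap a b d) ↔ v c < v d ∧
      ∀ e, swap a b c < swap a b e → swap a b e < swap a b d → ¬ (v c < v e ∧ v e < v d) := by
    unfold Cov
    simp only [Perm.mul_apply, swap_apply_self]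
    constructor
    · rintro ⟨_, h2, h3⟩
      refine ⟨h2, fun e h4 h5 => ?_⟩
      have := h3 _ h4 h5
      rwa [swap_apply_self] at this
    · rintro ⟨h2, h3⟩
      refine ⟨swap_adj_lt hab hcd hne, h2, fun e h4 h5 => ?_⟩
      apply h3 (swap a b e) <;> rwa [swap_apply_self]
  have hlt : ∀ x y : Fin N, swap a b x < swap a b y ↔
      ((x < y ∧ ¬ (x = a ∧ y = b)) ∨ (x = b ∧ y = a)) := by
    intro x y
    simp only [swap_apply_def, Fin.lt_def, Fin.ext_iff] at *
    split_ifs <;> omega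
  rw [hC]
  simp only [hlt]
  unfold Cov
  simp only [Perm.mul_apply]
  have hab' : a < b := by rw [Fin.lt_def]; omega
  by_cases h1 : c = a
  · subst h1
    have hdb : d ≠ b := fun e => hne ⟨rfl, e⟩
    have hbd : b < d := by rw [Fin.lt_def] at *; rw [Ne, Fin.ext_iff] at hdb; omega
    rw [swap_apply_left, swap_apply_of_ne_of_ne nab.symm hdb.symm]
    constructor
    · rintro ⟨⟨_, h2, h3⟩, h4⟩
      have := h3 b hab' hbd
      have := inj d b hdb
      refine ⟨by grind, h2, ?_⟩
      intro e he1 he2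
      apply h3 e <;> grind
    · rintro ⟨h4, h2, h3⟩
      refine ⟨⟨hcd, h2, ?_⟩, h2.trans h4⟩
      intro e he1 he2
      by_cases heb : e = b
      · subst heb; exact fun h => absurd h.2 h4.asymm
      · apply h3 e <;> grind
  by_cases h2 : c = b
  · subst h2
    have hda : d ≠ a := fun e => by subst e; exact absurd hcd hab'.asymm
    rw [swap_apply_left, swap_apply_of_ne_of_ne nab hda.symm]
    constructor
    · rintro ⟨⟨_, h2, h3⟩, h4⟩
      refine ⟨h4.trans h2, h2, ?_⟩
      intro e he1 he2
      by_cases hea : e = a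
      · subst hea; exact fun h => absurd h.1 h4.asymm
      · apply h3 e <;> grind
    · rintro ⟨h4, h2, h3⟩
      have := h3 a (Or.inr ⟨rfl, rfl⟩) (Or.inl ⟨hab'.trans hcd, fun h => hcd.ne h.2.symm⟩)
      have := inj a c nab
      refine ⟨⟨hcd, h2, ?_⟩, by grind⟩
      intro e he1 he2
      apply h3 e <;> grind
  by_cases h3 : d = a
  · subst h3
    rw [swap_apply_right, swap_apply_of_ne_of_ne (Ne.symm h2) nab.symm]
    constructor
    · rintro ⟨⟨_, h2, h3⟩, h4⟩
      refine ⟨h2.trans h4, h2, ?_⟩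
      intro e he1 he2
      by_cases heb : e = b
      · subst heb; exact fun h => absurd h.2 h4.asymm
      · apply h3 e <;> grind
    · rintro ⟨h4, h5, h3⟩
      have := h3 b (Or.inl ⟨hcd.trans hab', fun h => h1 h.1⟩) (Or.inr ⟨rfl, rfl⟩)
      have := inj b d nab.symm
      refine ⟨⟨hcd, h5, ?_⟩, by grind⟩
      intro e he1 he2
      apply h3 e <;> grind
  by_cases h4 : d = b
  · subst h4
    have hca : c < a := by rw [Fin.lt_def] at *; rw [Fin.ext_iff] at h1; omega
    rw [swap_apply_right, swap_apply_of_ne_of_ne (Ne.symm h1) nab]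
    constructor
    · rintro ⟨⟨_, h5, h3⟩, h4⟩
      have := h3 a hca hab'
      have := inj a c (Ne.symm h1)
      refine ⟨by grind, h5, ?_⟩
      intro e he1 he2
      apply h3 e <;> grind
    · rintro ⟨h4, h5, h3⟩
      refine ⟨⟨hcd, h5, ?_⟩, h4.trans h5⟩
      intro e he1 he2
      by_cases hea : e = a
      · subst hea; exact fun h => absurd h.1 h4.asymm
      · apply h3 e <;> grind
  rw [swap_apply_of_ne_of_ne (Ne.symm h1) (Ne.symm h3),
    swap_apply_of_ne_of_ne (Ne.symm h2) (Ne.symm h4)]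
  constructor
  · rintro ⟨⟨_, h5, h6⟩, h7⟩
    refine ⟨h7, h5, ?_⟩
    intro e he1 he2
    apply h6 e <;> grind
  · rintro ⟨h7, h5, h6⟩
    refine ⟨⟨hcd, h5, ?_⟩, h7⟩
    intro e he1 he2
    apply h6 e <;> grind

theorem tau_D {N : ℕ} {a b c d : Fin N} (hab : (b : ℕ) = a + 1) (hcd : c < d)
    (hne : ¬ (c = a ∧ d = b)) :
    tau c d * Dop a b = Dop a b * tau (swap a b c) (swap a b d) := by
  refine LinearMap.ext fun f => funext fun w => ?_
  simp only [Module.End.mul_apply]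
  rw [tau_apply, Dop_apply, Dop_apply, tau_apply]
  have e1 : w * swap a b * swap (swap a b c) (swap a b d) = w * swap c d * swap a b := by
    rw [mul_assoc, mul_assoc, Equiv.mul_swap_eq_swap_mul, swap_apply_self, swap_apply_self]
  rw [e1]
  have := cov_conj hab hcd hne (w * swap c d)
  rw [mul_assoc w (swap c d) (swap c d), swap_mul_self, mul_one] at this
  by_cases p : Cov (w * swap c d) c d <;> by_cases q : (w * swap c d) a < (w * swap c d) b <;>
  by_cases r : w a < w b <;> by_cases s : Cov (w * swap c d * swap a b) (swap a b c) (swap a b d) <;>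
  simp only [p, q, r, s, if_true, if_false, and_true, and_false] at this ⊢ <;> simp at this

theorem tau_D_self {N : ℕ} {a b : Fin N} (hab : (b : ℕ) = a + 1) :
    tau a b * Dop a b + Dop a b * tau a b = 1 := by
  refine LinearMap.ext fun f => funext fun w => ?_
  simp only [LinearMap.add_apply, Module.End.mul_apply, Pi.add_apply, Module.End.one_apply]
  rw [tau_apply, Dop_apply, Dop_apply, tau_apply, mul_assoc w, swap_mul_self, mul_one,
    cov_adj hab, cov_adj hab, mul_swap_left, mul_swap_right]
  have : w a ≠ w b := fun e => adj_ne hab (w.injective e)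
  rcases lt_or_gt_of_ne this with h | h
  · simp [h, h.asymm]
  · simp [h, h.asymm]

/-- Signed Bruhat operator. -/
noncomputable def sg {N : ℕ} (c d : Fin N) : Module.End ℤ (Perm (Fin N) → ℤ) :=
  if c < d then tau c d else if d < c then - tau d c else 0

/-- The operator of multiplication by a variable. -/
noncomputable def th {N : ℕ} (j : Fin N) : Module.End ℤ (Perm (Fin N) → ℤ) := ∑ d, sg j d

/-- Sign correction. -/
def eps {N : ℕ} (a b j : Fin N) : ℤ := if j = a then 1 else if j = b then -1 else 0

theorem sg_D {N : ℕ} {a b : Fin N} (hab : (b : ℕ) = a + 1) (c d : Fin N) :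
    sg c d * Dop a b = Dop a b * sg (swap a b c) (swap a b d) +
      (if d = swap a b c then eps a b c else 0) • (1 : Module.End ℤ (Perm (Fin N) → ℤ)) := by
  have nab := adj_ne hab
  have hab' : a < b := by rw [Fin.lt_def]; omega
  by_cases h1 : c = a ∧ d = b
  · obtain ⟨rfl, rfl⟩ := h1
    rw [swap_apply_left, swap_apply_right, if_pos rfl]
    simp only [sg, eps, hab', hab'.asymm, if_true, if_false, one_smul]
    rw [← tau_D_self hab, mul_neg]; abel
  by_cases h2 : c = b ∧ d = a
  · obtain ⟨rfl, rfl⟩ := h2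
    rw [swap_apply_left, swap_apply_right, if_pos rfl]
    simp only [sg, eps, hab', hab'.asymm, nab.symm, if_true, if_false, neg_smul, one_smul]
    rw [← tau_D_self hab, neg_mul]; abel
  have h3 : (if d = swap a b c then eps a b c else 0) = 0 := by
    unfold eps
    split_ifs with h3 h4 h5
    · subst h4; rw [swap_apply_left] at h3; exact absurd ⟨rfl, h3⟩ h1
    · subst h5; rw [swap_apply_right] at h3; exact absurd ⟨rfl, h3⟩ h2
    · rfl
    · rfl
  rw [h3, zero_smul, add_zero]
  rcases lt_trichotomy c d with h | h | h
  · have := swap_adj_lt hab h h1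
    simp only [sg, h, this, if_true]
    exact tau_D hab h h1
  · subst h; simp [sg]
  · have h' : ¬ (d = a ∧ c = b) := fun e => h2 ⟨e.2, e.1⟩
    have := swap_adj_lt hab h h'
    simp only [sg, h, this, h.asymm, this.asymm, if_true, if_false, neg_mul, mul_neg]
    rw [tau_D hab h h']

theorem th_D {N : ℕ} {a b : Fin N} (hab : (b : ℕ) = a + 1) (c : Fin N) :
    th c * Dop a b = Dop a b * th (swap a b c) +
      eps a b c • (1 : Module.End ℤ (Perm (Fin N) → ℤ)) := by
  unfold th
  rw [Finset.sum_mul, Finset.sum_congr rfl fun d _ => sg_D hab c d, Finset.sum_add_distrib,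
    ← Finset.mul_sum, Equiv.sum_comp (swap a b) (fun d => sg (swap a b c) d), ← Finset.sum_smul]
  simp

theorem X_mul_dd {N : ℕ} {a b : Fin N} (h : a ≠ b) (j : Fin N) (f : MvPolynomial (Fin N) ℤ) :
    X j * dd a b f = dd a b (X (swap a b j) * f) + eps a b j • f := by
  unfold eps
  split_ifs with h1 h2
  · subst h1; rw [swap_apply_left, dd_X_right h]; simp
  · subst h2; rw [swap_apply_right, dd_X_left h]; simp
  · rw [swap_apply_of_ne_of_ne h1 h2, dd_X_ne h h1 h2]; simp

theorem tau_w0 {N : ℕ} (a b : Fin N) : tau a b (Pi.single (w0 N) 1) = 0 := by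
  funext w
  rw [tau_apply]
  split_ifs with h
  · rw [Pi.single_apply, if_neg]; · rfl
    intro e
    rw [e] at h
    exact absurd h.2.1 (Fin.rev_lt_rev.2 h.1).asymm
  · rfl

theorem th_w0 {N : ℕ} (j : Fin N) : th j (Pi.single (w0 N) 1) = 0 := by
  unfold th
  rw [LinearMap.sum_apply]
  refine Finset.sum_eq_zero fun d _ => ?_
  unfold sg
  split_ifs
  · exact tau_w0 _ _
  · rw [LinearMap.neg_apply, tau_w0, neg_zero]
  · rfl

theorem monk_aux {n : ℕ} (L : ℕ) : ∀ w : Perm (Fin (n + 1)),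
    (n + 1) * (n + 1) - len w = L → ∀ j : Fin (n + 1),
      X j * schubertPoly (n + 1) w - Phi (th j (Pi.single w 1)) ∈ symIdeal (n + 1) := by
  induction L using Nat.strong_induction_on with
  | _ L IH =>
    intro w hL j
    by_cases hw : ∀ a b : Fin (n + 1), (b : ℕ) = a + 1 → ¬ w a < w b
    · rw [eq_w0_of_no_asc w hw, th_w0, map_zero, sub_zero, schub_w0]
      exact X_mul_staircase j
    · push Not at hw
      obtain ⟨a, b, hab, hlt⟩ := hw
      have hlen := len_adj_asc w a b hab hlt
      have hle := len_le (w * swap a b)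
      have ih := IH _ (by omega) (w * swap a b) rfl (swap a b j)
      have e1 : schubertPoly (n + 1) w = dd a b (schubertPoly (n + 1) (w * swap a b)) := by
        rw [schub_desc _ a b hab (by rw [mul_swap_left, mul_swap_right]; exact hlt), mul_assoc,
          swap_mul_self, mul_one]
      have e2 : (Pi.single w 1 : Perm (Fin (n + 1)) → ℤ) = Dop a b (Pi.single (w * swap a b) 1) := by
        funext v
        rw [Dop_apply, Pi.single_apply, Pi.single_apply]
        simp only [mul_left_inj]
        split_ifs with h1 h2 h2
        · rfl
        · subst h1; exact absurd hlt h2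
        · rfl
        · rfl
      have e3 := LinearMap.congr_fun (th_D hab j) (Pi.single (w * swap a b) 1)
      simp only [Module.End.mul_apply, LinearMap.add_apply, LinearMap.smul_apply,
        Module.End.one_apply] at e3
      rw [e1, e2, e3, map_add, map_smul, Phi_single, X_mul_dd (adj_ne hab), ← dd_Phi hab]
      have := dd_mem (adj_ne hab) _ ih
      rw [sub_eq_add_neg, dd_add (adj_ne hab), ← neg_one_zsmul, dd_smul (adj_ne hab)] at this
      convert this using 1
      simp [sub_eq_add_neg]

/-- Monk's rule in the quotient. -/
theorem monk {n : ℕ} (j : Fin (n + 1)) (f : Perm (Fin (n + 1)) → ℤ) :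
    Ideal.Quotient.mk (symIdeal (n + 1)) (X j * Phi f) =
      Ideal.Quotient.mk (symIdeal (n + 1)) (Phi (th j f)) := by
  have e : f = ∑ w, f w • (Pi.single w 1 : Perm (Fin (n + 1)) → ℤ) := by
    funext v
    simp [Finset.sum_apply, Pi.single_apply]
  conv_lhs => rw [e]
  conv_rhs => rw [e]
  simp only [map_sum, map_zsmul, Finset.mul_sum, mul_smul_comm]
  refine Finset.sum_congr rfl fun w _ => ?_
  rw [Phi_single, (Ideal.Quotient.eq).2 (monk_aux _ w rfl j)]



/-! Conclusion. -/

theorem theta_eq_th {N : ℕ} (j : Fin N) (J : List (Fin N)) (hn : J.Nodup)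
    (hJ : ∀ x, x ∈ J ↔ j < x) (I : Finset (Fin N)) (hI : ∀ x, x ∈ I ↔ x < j) :
    theta I j J = th j := by
  have h1 : ∀ d, sg j d = (if d ∈ J.toFinset then tau j d else 0) -
      (if d ∈ I then tau d j else 0) := by
    intro d
    rw [sg]
    simp only [List.mem_toFinset, hJ, hI]
    rcases lt_trichotomy j d with h | h | h
    · simp [h, h.asymm]
    · simp [h]
    · simp [h, h.asymm]
  unfold theta th
  rw [Finset.sum_congr rfl fun d _ => h1 d, Finset.sum_sub_distrib, ← List.sum_toFinset _ hn]
  congr 1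
  · rw [Finset.sum_ite_mem, Finset.univ_inter]
  · rw [Finset.sum_ite_mem, Finset.univ_inter]

theorem EE_empty {N : ℕ} (m : ℕ) (J : List (Fin N)) :
    EE (m + 1) (∅ : Finset (Fin N)) J = 0 := by
  induction J with
  | nil => exact EE_nil _ _
  | cons b J ih => rw [EE_cons, ih]; simp

theorem ePoly_zero (N k : ℕ) : ePoly N k 0 = 1 := by
  simp [ePoly]

theorem ePoly_succ {N : ℕ} (j : Fin N) (m : ℕ) :
    ePoly N ((j : ℕ) + 1) (m + 1) = ePoly N j (m + 1) + X j * ePoly N j m := by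
  unfold ePoly
  have hj : j ∉ Finset.univ.filter (fun i : Fin N => (i : ℕ) < j) := by simp
  rw [filter_succ j, Finset.powersetCard_succ_insert hj, Finset.sum_union, Finset.mul_sum]
  · congr 1
    rw [Finset.sum_image]
    · refine Finset.sum_congr rfl fun s hs => ?_
      rw [Finset.prod_insert]
      intro h
      exact hj ((Finset.mem_powersetCard.1 hs).1 h)
    · intro s hs s' hs' e
      have h1 : j ∉ s := fun h => hj ((Finset.mem_powersetCard.1 hs).1 h)
      have h2 : j ∉ s' := fun h => hj ((Finset.mem_powersetCard.1 hs').1 h)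
      have e' : insert j s = insert j s' := e
      rw [← Finset.erase_insert h1, e', Finset.erase_insert h2]
  · rw [Finset.disjoint_left]
    intro s hs hs'
    obtain ⟨s', _, rfl⟩ := Finset.mem_image.1 hs'
    exact hj ((Finset.mem_powersetCard.1 hs).1 (Finset.mem_insert_self _ _))

theorem pieri_op {n : ℕ} (k : ℕ) : k ≤ n + 1 → ∀ (m : ℕ) (J : List (Fin (n + 1))), J.Nodup →
    (∀ x, x ∈ J ↔ k ≤ (x : ℕ)) → ∀ f : Perm (Fin (n + 1)) → ℤ,
    Ideal.Quotient.mk (symIdeal (n + 1)) (ePoly (n + 1) k m * Phi f) =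
      Ideal.Quotient.mk (symIdeal (n + 1))
        (Phi (EE m (Finset.univ.filter (fun i : Fin (n + 1) => (i : ℕ) < k)) J f)) := by
  induction k with
  | zero =>
    intro _ m J _ _ f
    rcases m with _ | m
    · rw [ePoly_zero, EE_zero, one_mul]; rfl
    · have : Finset.univ.filter (fun i : Fin (n + 1) => (i : ℕ) < 0) = ∅ := by simp
      rw [this, EE_empty]
      have h2 : ePoly (n + 1) 0 (m + 1) = 0 := by
        unfold ePoly
        rw [this, Finset.powersetCard_eq_empty.2 (by simp), Finset.sum_empty]
      rw [h2]; simp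
  | succ k ih =>
    intro hk m J hn hJ f
    rcases m with _ | m
    · rw [ePoly_zero, EE_zero, one_mul]; rfl
    let j : Fin (n + 1) := ⟨k, by omega⟩
    have hJj : ∀ x, x ∈ J ↔ j < x := by
      intro x; rw [hJ, Fin.lt_def]; exact Nat.succ_le_iff
    have hn' : (j :: J).Nodup := List.nodup_cons.2 ⟨fun h => lt_irrefl _ ((hJj j).1 h), hn⟩
    have hJ' : ∀ x, x ∈ j :: J ↔ k ≤ (x : ℕ) := by
      intro x
      rw [List.mem_cons, hJj, Fin.lt_def, Fin.ext_iff]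
      simp only [j]; omega
    have ih := fun m => ih (by omega) m (j :: J) hn' hJ'
    rw [show k + 1 = (j : ℕ) + 1 from rfl, filter_succ j, ePoly_succ,
      EE_main j m J _ (by intro c hc; exact (Finset.mem_filter.1 hc).2)
        (fun c hc => (hJj c).1 hc) hn,
      theta_eq_th j J hn hJj _ (by intro x; simp)]
    rw [LinearMap.add_apply, map_add, map_add, add_mul, map_add, Module.End.mul_apply, ← monk,
      map_mul _ (X j) (Phi _), ← ih m f, ← ih (m + 1) f, mul_assoc, map_mul _ (X j)]

theorem pieri_final (n k m : ℕ) (hkn : k ≤ n + 1) (w : Equiv.Perm (Fin (n + 1))) :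
    SS (n + 1) w * Ideal.Quotient.mk (symIdeal (n + 1)) (ePoly (n + 1) k m) =
      ∑ w' ∈ Finset.univ.filter (RelC (n + 1) k m w), SS (n + 1) w' := by
  let J := (Finset.univ.filter (fun i : Fin (n + 1) => k ≤ (i : ℕ))).toList
  have hn : J.Nodup := Finset.nodup_toList _
  have hJ : ∀ x, x ∈ J ↔ k ≤ (x : ℕ) := by intro x; simp [J]
  have h := pieri_op k hkn m J hn hJ (Pi.single w 1)
  rw [Phi_single, map_mul, mul_comm] at h
  rw [SS, h, Phi_apply, map_sum, Finset.sum_filter]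
  refine Finset.sum_congr rfl fun w' _ => ?_
  rw [EE_eq_RelC hkn w w' _ J hn (by simp) hJ]
  split_ifs
  · rw [one_smul]; rfl
  · rw [zero_smul, map_zero]


/-- Pieri's rule for elementary symmetric polynomials:
`𝔖_w · e_m(x₁,…,x_k) = Σ_{w →_{c[k,m]} w'} 𝔖_{w'}` in `Hₙ` (here the paper's `n` is `n+1`). -/
theorem pieri_elementary (n k m : ℕ) (hm : 1 ≤ m) (hmk : m ≤ k) (hkn : k ≤ n + 1)
    (w : Equiv.Perm (Fin (n + 1))) :
    SS (n + 1) w * Ideal.Quotient.mk (symIdeal (n + 1)) (ePoly (n + 1) k m) =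
      ∑ w' ∈ Finset.univ.filter (RelC (n + 1) k m w), SS (n + 1) w' := by
  exact pieri_final n k m hkn w

end SchubertPieri
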